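/- arXiv:math/0602508 — 5 statements merged into one kernel-verified Lean document; each statement's English description precedes it below -/
import Mathlib

section
/- Let G be a group, let U₀ and W₀ be subgroups of G, and let u, w, a, b ∈ G satisfy: (1) ab = ba; (2) u ∈ ⟨{u^a, u^b} ∪ U₀⟩, u^a ∈ ⟨{u, u^b} ∪ U₀⟩, and u^b ∈ ⟨{u, u^a} ∪ U₀⟩; (3) w ∈ ⟨{w^a, w^b} ∪ W₀⟩, w^a ∈ ⟨{w, w^b} ∪ W₀⟩, and w^b ∈ ⟨{w, w^a} ∪ W₀⟩; (4) u commutes with w and u^a commutes with w; (5) U₀^a = U₀^b = U₀ and W₀^a = W₀^b = W₀ (conjugation by a and by b maps each of U₀ and W₀ onto itself); (6) every element of U₀ commutes with w, and u commutes with every element of W₀. Then every element of the subgroup generated by {u^g : g ∈ ⟨a, b⟩} commutes with every element of the subgroup generated by {w^g : g ∈ ⟨a, b⟩}. -/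
theorem bcrw_comb (P : ℤ → ℤ → Prop)
    (U1 : ∀ i j, P (i+1) j → P i (j+1) → P i j)
    (U2 : ∀ i j, P i j → P i (j+1) → P (i+1) j)
    (U3 : ∀ i j, P i j → P (i+1) j → P i (j+1))
    (W1 : ∀ i j, P (i-1) j → P i (j-1) → P i j)
    (W2 : ∀ i j, P i j → P i (j-1) → P (i-1) j)
    (W3 : ∀ i j, P i j → P (i-1) j → P i (j-1))
    (h0 : P 0 0) (h1 : P 1 0) (i j : ℤ) : P i j := by
  have up : ∀ i j, P i j ∧ P (i+1) j → P i (j+1) ∧ P (i+1) (j+1) := by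
    rintro i j ⟨h, h'⟩
    have h2 := U3 i j h h'
    exact ⟨h2, W1 (i+1) (j+1) (by simpa using h2) (by simpa using h')⟩
  have down : ∀ i j, P i j ∧ P (i+1) j → P i (j-1) ∧ P (i+1) (j-1) := by
    rintro i j ⟨h, h'⟩
    have h2 := W3 (i+1) j h' (by simpa using h)
    exact ⟨U1 i (j-1) h2 (by simpa using h), h2⟩
  have right : ∀ i j, P i j ∧ P (i+1) j → P (i+1) j ∧ P (i+1+1) j := by
    rintro i j ⟨h, h'⟩
    exact ⟨h', U2 (i+1) j h' (up i j ⟨h, h'⟩).2⟩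
  have left : ∀ i j, P i j ∧ P (i+1) j → P (i-1) j ∧ P (i-1+1) j := by
    rintro i j ⟨h, h'⟩
    exact ⟨W2 i j h (down i j ⟨h, h'⟩).1, by simpa using h⟩
  have row : ∀ i, P i 0 ∧ P (i+1) 0 := by
    intro i
    induction i using Int.induction_on with
    | zero => exact ⟨h0, by simpa using h1⟩
    | succ n ih => exact right _ _ ih
    | pred n ih => exact left _ _ ih
  have all : P i j ∧ P (i+1) j := by
    induction j using Int.induction_on with
    | zero => exact row i
    | succ n ih => exact up _ _ ih
    | pred n ih => exact down _ _ ih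
  exact all.1

theorem bcrw_gen {G : Type} [Group G] (U : Subgroup G) (x y z g w : G)
    (hx : x ∈ Subgroup.closure (({y, z} : Set G) ∪ (U : Set G)))
    (hU : ∀ t ∈ U, Commute (g⁻¹ * t * g) w)
    (hy : Commute (g⁻¹ * y * g) w) (hz : Commute (g⁻¹ * z * g) w) :
    Commute (g⁻¹ * x * g) w := by
  induction hx using Subgroup.closure_induction with
  | mem t ht =>
    rcases ht with (rfl | rfl) | ht
    · exact hy
    · exact hz
    · exact hU t ht
  | one => simp
  | mul s t _ _ hs ht =>
    have : g⁻¹ * (s * t) * g = (g⁻¹ * s * g) * (g⁻¹ * t * g) := by group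
    rw [this]; exact hs.mul_left ht
  | inv s _ hs =>
    have : g⁻¹ * s⁻¹ * g = (g⁻¹ * s * g)⁻¹ := by group
    rw [this]; exact hs.inv_left

theorem bcrw_inv {G : Type} [Group G] (U : Subgroup G) (a b : G)
    (ha : (fun x => a⁻¹ * x * a) '' (U : Set G) = (U : Set G))
    (hb : (fun x => b⁻¹ * x * b) '' (U : Set G) = (U : Set G))
    (g : G) (hg : g ∈ Subgroup.closure ({a, b} : Set G)) :
    ∀ t, t ∈ U ↔ g⁻¹ * t * g ∈ U := by
  have key : ∀ c : G, (fun x => c⁻¹ * x * c) '' (U : Set G) = (U : Set G) →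
      ∀ t, t ∈ U ↔ c⁻¹ * t * c ∈ U := by
    intro c hc t
    constructor
    · intro h
      have : c⁻¹ * t * c ∈ (U : Set G) := by rw [← hc]; exact ⟨t, h, rfl⟩
      exact this
    · intro h
      have h' : c⁻¹ * t * c ∈ (U : Set G) := h
      rw [← hc] at h'
      obtain ⟨s, hs, he⟩ := h'
      have : s = t := by simpa using he
      exact this ▸ hs
  induction hg using Subgroup.closure_induction with
  | mem t ht =>
    rcases ht with rfl | rfl
    · exact key _ ha
    · exact key _ hb
  | one => simp
  | mul s t _ _ hs ht =>
    intro x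
    rw [hs x, ht]
    simp [mul_assoc]
  | inv s _ hs =>
    intro x
    rw [hs (s⁻¹⁻¹ * x * s⁻¹)]
    simp [mul_assoc]

theorem bcrw_flip {G : Type} [Group G] (u w g : G) :
    Commute (g⁻¹ * u * g) w ↔ Commute (g⁻¹⁻¹ * w * g⁻¹) u := by
  rw [Commute.symm_iff (a := g⁻¹⁻¹ * w * g⁻¹)]
  constructor
  · intro h
    have := congrArg (fun x => g * x * g⁻¹) h.eq
    simpa [Commute, SemiconjBy, mul_assoc] using this
  · intro h
    have := congrArg (fun x => g⁻¹ * x * g) h.eq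
    simpa [Commute, SemiconjBy, mul_assoc] using this

/-- **The nonabelian BCRW trick.** Under the hypotheses (1)–(6) below, every element of
the subgroup generated by the `⟨a,b⟩`-conjugates of `u` commutes with every element of
the subgroup generated by the `⟨a,b⟩`-conjugates of `w`. -/
theorem bcrw_trick_nonabelian {G : Type} [Group G] (U₀ W₀ : Subgroup G) (u w a b : G)
    -- (1)
    (hab : a * b = b * a)
    -- (2)
    (hu1 : u ∈ Subgroup.closure (({a⁻¹ * u * a, b⁻¹ * u * b} : Set G) ∪ (U₀ : Set G)))
    (hu2 : a⁻¹ * u * a ∈ Subgroup.closure (({u, b⁻¹ * u * b} : Set G) ∪ (U₀ : Set G)))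
    (hu3 : b⁻¹ * u * b ∈ Subgroup.closure (({u, a⁻¹ * u * a} : Set G) ∪ (U₀ : Set G)))
    -- (3)
    (hw1 : w ∈ Subgroup.closure (({a⁻¹ * w * a, b⁻¹ * w * b} : Set G) ∪ (W₀ : Set G)))
    (hw2 : a⁻¹ * w * a ∈ Subgroup.closure (({w, b⁻¹ * w * b} : Set G) ∪ (W₀ : Set G)))
    (hw3 : b⁻¹ * w * b ∈ Subgroup.closure (({w, a⁻¹ * w * a} : Set G) ∪ (W₀ : Set G)))
    -- (4)
    (h4a : Commute u w) (h4b : Commute (a⁻¹ * u * a) w)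
    -- (5)
    (h5a : (fun x => a⁻¹ * x * a) '' (U₀ : Set G) = (U₀ : Set G))
    (h5b : (fun x => b⁻¹ * x * b) '' (U₀ : Set G) = (U₀ : Set G))
    (h5c : (fun x => a⁻¹ * x * a) '' (W₀ : Set G) = (W₀ : Set G))
    (h5d : (fun x => b⁻¹ * x * b) '' (W₀ : Set G) = (W₀ : Set G))
    -- (6)
    (h6a : ∀ x ∈ U₀, Commute x w) (h6b : ∀ y ∈ W₀, Commute u y) :
    ∀ x ∈ Subgroup.closure
        {z : G | ∃ g ∈ Subgroup.closure ({a, b} : Set G), z = g⁻¹ * u * g},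
      ∀ y ∈ Subgroup.closure
        {z : G | ∃ g ∈ Subgroup.closure ({a, b} : Set G), z = g⁻¹ * w * g},
        Commute x y := by
  have hpow : ∀ i j : ℤ, a ^ i * b ^ j ∈ Subgroup.closure ({a, b} : Set G) := fun i j =>
    mul_mem (zpow_mem (Subgroup.subset_closure (by simp)) _)
      (zpow_mem (Subgroup.subset_closure (by simp)) _)
  have hc : Commute a b := hab
  have hA : ∀ i j : ℤ, a ^ (i+1) * b ^ j = a * (a ^ i * b ^ j) := fun i j => by
    rw [add_comm, zpow_add, zpow_one, mul_assoc]
  have hB : ∀ i j : ℤ, a ^ i * b ^ (j+1) = b * (a ^ i * b ^ j) := fun i j => by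
    rw [add_comm, zpow_add, zpow_one, ← mul_assoc, (hc.zpow_left i).eq, mul_assoc]
  have hA' : ∀ i j : ℤ, (a ^ (i-1) * b ^ j)⁻¹ = a * (a ^ i * b ^ j)⁻¹ := fun i j => by
    have := hA (i-1) j
    rw [sub_add_cancel] at this
    have h2 : Commute a (a ^ (i-1) * b ^ j) :=
      ((Commute.refl a).zpow_right _).mul_right (hc.zpow_right _)
    rw [this, h2.eq]
    simp
  have hB' : ∀ i j : ℤ, (a ^ i * b ^ (j-1))⁻¹ = b * (a ^ i * b ^ j)⁻¹ := fun i j => by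
    have := hB i (j-1)
    rw [sub_add_cancel] at this
    have h2 : Commute b (a ^ i * b ^ (j-1)) :=
      (hc.symm.zpow_right _).mul_right ((Commute.refl b).zpow_right _)
    rw [this, h2.eq]
    simp
  have hUg : ∀ i j : ℤ, ∀ t ∈ U₀,
      Commute ((a ^ i * b ^ j)⁻¹ * t * (a ^ i * b ^ j)) w := fun i j t ht =>
    h6a _ ((bcrw_inv U₀ a b h5a h5b _ (hpow i j) t).1 ht)
  have hWg : ∀ i j : ℤ, ∀ t ∈ W₀,
      Commute ((a ^ i * b ^ j)⁻¹⁻¹ * t * (a ^ i * b ^ j)⁻¹) u := fun i j t ht =>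
    (h6b _ ((bcrw_inv W₀ a b h5c h5d _ (inv_mem (hpow i j)) t).1 ht)).symm
  have e : ∀ c g x : G, (c * g)⁻¹ * x * (c * g) = g⁻¹ * (c⁻¹ * x * c) * g := by
    intro c g x; group
  have main : ∀ i j : ℤ, Commute ((a ^ i * b ^ j)⁻¹ * u * (a ^ i * b ^ j)) w := by
    apply bcrw_comb
    · intro i j h h'
      rw [hA, e] at h; rw [hB, e] at h'
      exact bcrw_gen U₀ _ _ _ _ _ hu1 (hUg i j) h h'
    · intro i j h h'
      rw [hA, e]; rw [hB, e] at h'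
      exact bcrw_gen U₀ _ _ _ _ _ hu2 (hUg i j) h h'
    · intro i j h h'
      rw [hA, e] at h'; rw [hB, e]
      exact bcrw_gen U₀ _ _ _ _ _ hu3 (hUg i j) h h'
    · intro i j h h'
      rw [bcrw_flip] at h h' ⊢
      rw [hA', e] at h; rw [hB', e] at h'
      exact bcrw_gen W₀ _ _ _ _ _ hw1 (hWg i j) h h'
    · intro i j h h'
      rw [bcrw_flip] at h h' ⊢
      rw [hA', e]; rw [hB', e] at h'
      exact bcrw_gen W₀ _ _ _ _ _ hw2 (hWg i j) h h'
    · intro i j h h'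
      rw [bcrw_flip] at h h' ⊢
      rw [hA', e] at h'; rw [hB', e]
      exact bcrw_gen W₀ _ _ _ _ _ hw3 (hWg i j) h h'
    · simpa using h4a
    · simpa using h4b
  have hform : ∀ g ∈ Subgroup.closure ({a, b} : Set G), ∃ i j : ℤ, g = a ^ i * b ^ j := by
    intro g hg
    induction hg using Subgroup.closure_induction with
    | mem t ht =>
      rcases ht with rfl | rfl
      · exact ⟨1, 0, by simp⟩
      · exact ⟨0, 1, by simp⟩
    | one => exact ⟨0, 0, by simp⟩
    | mul s t _ _ hs ht =>
      obtain ⟨i, j, rfl⟩ := hs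
      obtain ⟨k, l, rfl⟩ := ht
      refine ⟨i + k, j + l, ?_⟩
      rw [zpow_add, zpow_add, mul_assoc, mul_assoc, ← mul_assoc (b ^ j),
        ((hc.symm.zpow_left j).zpow_right k).eq, mul_assoc]
    | inv s _ hs =>
      obtain ⟨i, j, rfl⟩ := hs
      refine ⟨-i, -j, ?_⟩
      rw [mul_inv_rev, zpow_neg, zpow_neg,
        ((hc.zpow_left i).zpow_right j).inv_inv.eq]
  intro x hx y hy
  have h1 : ∀ g ∈ Subgroup.closure ({a, b} : Set G), ∀ h ∈ Subgroup.closure ({a, b} : Set G),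
      Commute (g⁻¹ * u * g) (h⁻¹ * w * h) := by
    intro g hg h hh
    obtain ⟨i, j, hij⟩ := hform _ (mul_mem hg (inv_mem hh))
    have := main i j
    rw [← hij] at this
    have := congrArg (fun x => h⁻¹ * x * h) this.eq
    simpa [Commute, SemiconjBy, mul_assoc] using this
  have h2 : x ∈ Subgroup.centralizer
      {z : G | ∃ g ∈ Subgroup.closure ({a, b} : Set G), z = g⁻¹ * w * g} := by
    refine (Subgroup.closure_le _).2 ?_ hx
    rintro _ ⟨g, hg, rfl⟩
    rw [SetLike.mem_coe, Subgroup.mem_centralizer_iff]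
    rintro _ ⟨h, hh, rfl⟩
    exact (h1 g hg h hh).eq.symm
  have h3 : y ∈ Subgroup.centralizer ({x} : Set G) := by
    refine (Subgroup.closure_le _).2 ?_ hy
    intro z hz
    rw [SetLike.mem_coe, Subgroup.mem_centralizer_iff]
    rintro _ rfl
    exact (Subgroup.mem_centralizer_iff.1 h2 z hz).symm
  exact Subgroup.mem_centralizer_iff.1 h3 x rfl
end

section
/- Let k ≥ 1, let 𝓜 be a finite collection of finite subsets of ℤ^k, and let |·| : ℤ^k → ℝ be a function taking nonnegative values such that for every real r the set {v ∈ ℤ^k : |v| ≤ r} is finite. Call S ⊆ ℤ^k closed if for every v ∈ ℤ^k and every M ∈ 𝓜, whenever S contains all but at most one element of the translate v + M = {v + m : m ∈ M}, then v + M ⊆ S. Call w ∈ ℤ^k reducible if there exist u ∈ ℤ^k and M ∈ 𝓜 such that w ∈ u + M and |w| > |x| for every element x of u + M other than w; call w irreducible otherwise. If S ⊆ ℤ^k is closed and contains every irreducible vector, then S = ℤ^k. -/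
/-- Let `𝓜` be a finite collection of finite subsets of `ℤ^k` and fix a nonnegative
length function with finite balls.  If `S ⊆ ℤ^k` is closed (whenever `S` contains all
but at most one element of a translate `v + M` of some `M ∈ 𝓜`, it contains the whole
translate) and contains every irreducible vector (a vector is reducible if it is the
unique longest element of some translate `u + M`), then `S = ℤ^k`. -/
theorem closed_set_containing_irreducibles_eq_univ
    (k : ℕ) (hk : 1 ≤ k)
    (𝓜 : Finset (Finset (Fin k → ℤ)))
    (len : (Fin k → ℤ) → ℝ)
    (hlen_nonneg : ∀ v, 0 ≤ len v)
    (hlen_fin : ∀ r : ℝ, {v : Fin k → ℤ | len v ≤ r}.Finite)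
    (S : Set (Fin k → ℤ))
    (hclosed : ∀ (v : Fin k → ℤ), ∀ M ∈ 𝓜,
      (∃ m₀ : Fin k → ℤ, ∀ m ∈ M, m ≠ m₀ → v + m ∈ S) → ∀ m ∈ M, v + m ∈ S)
    (hirr : ∀ w : Fin k → ℤ,
      ¬ (∃ u : Fin k → ℤ, ∃ M ∈ 𝓜, (∃ m ∈ M, w = u + m) ∧
          ∀ m ∈ M, u + m ≠ w → len (u + m) < len w) →
        w ∈ S) :
    S = Set.univ := by
  have key : ∀ n : ℕ, ∀ w : Fin k → ℤ, {v | len v ≤ len w}.ncard = n → w ∈ S := by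
    intro n
    induction n using Nat.strong_induction_on with
    | _ n ih =>
      intro w hw
      by_cases h : ∃ u : Fin k → ℤ, ∃ M ∈ 𝓜, (∃ m ∈ M, w = u + m) ∧
          ∀ m ∈ M, u + m ≠ w → len (u + m) < len w
      · obtain ⟨u, M, hM, ⟨m₁, hm₁, rfl⟩, hlt⟩ := h
        refine hclosed u M hM ⟨m₁, fun m hm hne => ?_⟩ m₁ hm₁
        have hl := hlt m hm (fun e => hne (add_left_cancel e))
        refine ih _ ?_ (u + m) rfl
        rw [← hw]
        refine Set.ncard_lt_ncard ?_ (hlen_fin _)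
        refine ⟨fun x (hx : len x ≤ _) => (hx.trans hl.le : len x ≤ _), fun hs => ?_⟩
        have h2 : len (u + m₁) ≤ len (u + m) :=
          hs (show len (u + m₁) ≤ len (u + m₁) from le_rfl)
        exact absurd hl (not_lt.mpr h2)
      · exact hirr w h
  exact Set.eq_univ_of_forall fun w => key _ w rfl
end

section
/- Let p be a prime and let F be a finite field of characteristic p with |F| = q, where q ∉ {2, 3, 5, 9}. Then there exist nonzero elements a, b ∈ F with b² = a² + 1 such that a² generates F over its prime field, i.e., the F_p-subalgebra of F generated by a² equals all of F. -/
lemma subring_eq_top_of_sum {F : Type} [Field F] [Fintype F] (K : Subfield F) (g : F) (hg0 : g ≠ 0)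
    (hg : orderOf g = Fintype.card F - 1) (hq : 7 ≤ Fintype.card F)
    (h9 : Fintype.card F ≠ 9) (hodd : Odd (Fintype.card F)) (hu : g ^ 2 + (g ^ 2)⁻¹ ∈ K) : K = ⊤ := by
  classical
  have hcard : Fintype.card F = Fintype.card K ^ Module.finrank K F := Module.card_eq_pow_finrank
  have hr2 : 1 < Fintype.card K := Fintype.one_lt_card
  set r := Fintype.card K with hr
  set m := Module.finrank K F with hm
  have hord : ∀ n : ℕ, 0 < n → g ^ n = 1 → Fintype.card F - 1 ≤ n := by
    intro n hn h
    rw [← hg]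
    exact Nat.le_of_dvd hn (orderOf_dvd_of_pow_eq_one h)
  have hm1 : m ≤ 1 := by
    by_contra! hm2
    have hle : r ^ 2 ≤ Fintype.card F := by
      rw [hcard]; exact Nat.pow_le_pow_right (by omega) hm2
    have h1 : (g ^ 2) ^ r + ((g ^ 2) ^ r)⁻¹ = g ^ 2 + (g ^ 2)⁻¹ := by
      have := (FiniteField.frobeniusAlgHom K F).commutes ⟨_, hu⟩
      change FiniteField.frobeniusAlgHom K F (g ^ 2 + (g ^ 2)⁻¹) = g ^ 2 + (g ^ 2)⁻¹ at this
      rw [map_add, map_inv₀] at this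
      exact this
    have hs : (g ^ 2) ≠ 0 := pow_ne_zero _ hg0
    have hs' : (g ^ 2) ^ r ≠ 0 := pow_ne_zero _ hs
    have h2 : ((g ^ 2) ^ r - g ^ 2) * ((g ^ 2) ^ r * g ^ 2 - 1) = 0 := by
      generalize (g ^ 2) ^ r = y at *
      generalize g ^ 2 = x at *
      field_simp at h1
      linear_combination h1
    have h3 : Fintype.card F - 1 ≤ 2 * (r + 1) := by
      rcases mul_eq_zero.mp h2 with h | h
      · have : g ^ (2 * (r - 1)) = 1 := by
          have e : (g ^ 2) ^ r = (g ^ 2) ^ (r - 1) * g ^ 2 := by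
            rw [← pow_succ]; congr 1; omega
          rw [pow_mul]
          apply mul_right_cancel₀ hs
          rw [← e, one_mul]; exact sub_eq_zero.mp h
        have := hord _ (by omega) this
        omega
      · apply hord _ (by omega)
        rw [pow_mul, pow_succ]; exact sub_eq_zero.mp h
    have hr3 : r ≤ 3 := by
      by_contra! h4
      have : r ^ 2 ≤ 2 * r + 3 := by omega
      nlinarith
    have hle9 : Fintype.card F ≤ 9 := by omega
    have hoddr : Odd r := by
      rw [hcard] at hodd
      exact (Nat.odd_pow_iff (by omega)).mp hodd
    have : r = 3 := by
      obtain ⟨k, hk⟩ := hoddr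
      omega
    rw [this] at hle
    omega
  have hm0 : 0 < m := Module.finrank_pos
  have hm' : m = 1 := by omega
  rw [hm', pow_one] at hcard
  have : (K : Set F) = Set.univ := by
    have h : Function.Bijective (Subtype.val : K → F) := by
      rw [Fintype.bijective_iff_injective_and_card]
      exact ⟨Subtype.val_injective, hcard.symm⟩
    ext x
    obtain ⟨y, rfl⟩ := h.2 x
    simp
  exact SetLike.coe_injective (by simpa using this)

lemma exists_gen (F : Type) [Field F] [Fintype F] :
    ∃ g : F, g ≠ 0 ∧ orderOf g = Fintype.card F - 1 ∧ ∀ x : F, x ≠ 0 → ∃ n : ℕ, g ^ n = x := by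
  classical
  obtain ⟨g, hg⟩ := IsCyclic.exists_generator (α := Fˣ)
  refine ⟨g, g.ne_zero, ?_, ?_⟩
  · rw [orderOf_units, orderOf_eq_card_of_forall_mem_zpowers hg, Nat.card_eq_fintype_card,
      Fintype.card_units]
  · intro x hx
    have := hg (Units.mk0 x hx)
    rw [← mem_powers_iff_mem_zpowers] at this
    obtain ⟨n, hn⟩ := this
    refine ⟨n, ?_⟩
    have := congrArg Units.val hn
    simpa using this

/-- In a finite field `F` of characteristic `p` and order `q ∉ {2, 3, 5, 9}`, there are
nonzero elements `a, b` with `b² = a² + 1` such that `a²` generates `F` over its prime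
field (i.e. the smallest subring of `F` containing `a²` is all of `F`). -/
theorem exists_generating_pythagorean_pair
    (F : Type) [Field F] [Fintype F] (p : ℕ) (hp : p.Prime) [CharP F p]
    (h2 : Fintype.card F ≠ 2) (h3 : Fintype.card F ≠ 3)
    (h5 : Fintype.card F ≠ 5) (h9 : Fintype.card F ≠ 9) :
    ∃ a b : F, a ≠ 0 ∧ b ≠ 0 ∧ b ^ 2 = a ^ 2 + 1 ∧
      Subring.closure ({a ^ 2} : Set F) = ⊤ := by
  classical
  have hq2 : 1 < Fintype.card F := Fintype.one_lt_card
  obtain ⟨g, hg0, hg, hgen⟩ := exists_gen F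
  have hord : ∀ n : ℕ, 0 < n → g ^ n = 1 → Fintype.card F - 1 ≤ n := by
    intro n hn h
    rw [← hg]
    exact Nat.le_of_dvd hn (orderOf_dvd_of_pow_eq_one h)
  by_cases hp2 : p = 2
  · subst hp2
    obtain ⟨a, ha⟩ := (FiniteField.isSquare_of_char_two (ringChar.eq F 2) g :)
    have ha2 : a ^ 2 = g := by rw [ha, sq]
    refine ⟨a, a + 1, ?_, ?_, ?_, ?_⟩
    · rintro rfl; apply hg0; rw [← ha2]; simp
    · intro h
      have h' : g = 1 := by
        rw [← ha2, eq_neg_of_add_eq_zero_left h]; simp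
      have := hord 1 one_pos (by simpa using h')
      omega
    · rw [CharTwo.add_sq, one_pow]
    · rw [ha2, eq_top_iff]
      intro x _
      by_cases hx : x = 0
      · rw [hx]; exact zero_mem _
      · obtain ⟨n, rfl⟩ := hgen x hx
        exact pow_mem (Subring.subset_closure (Set.mem_singleton _)) n
  · have hrc : ringChar F ≠ 2 := by rwa [ringChar.eq F p]
    have hodd : Odd (Fintype.card F) := Nat.odd_iff.mpr (FiniteField.odd_card_of_char_ne_two hrc)
    have hq7 : 7 ≤ Fintype.card F := by
      obtain ⟨k, hk⟩ := hodd
      omega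
    have h20 : (2 : F) ≠ 0 := Ring.two_ne_zero hrc
    have hg4 : g ^ 4 ≠ 1 := by
      intro h
      have := hord 4 (by norm_num) h
      omega
    refine ⟨(g - g⁻¹) / 2, (g + g⁻¹) / 2, ?_, ?_, ?_, ?_⟩
    · intro h
      apply hg4
      field_simp at h
      linear_combination (g ^ 2 + 1) * h
    · intro h
      apply hg4
      field_simp at h
      linear_combination (g ^ 2 - 1) * h
    · field_simp
      ring
    · set S := Subring.closure ({((g - g⁻¹) / 2) ^ 2} : Set F) with hS
      let K : Subfield F :=
        { S with
          inv_mem' := by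
            intro x hx
            by_cases hx0 : x = 0
            · simpa [hx0] using S.zero_mem
            · have : x⁻¹ = x ^ (Fintype.card F - 2) := by
                apply inv_eq_of_mul_eq_one_right
                rw [← pow_succ', ← FiniteField.pow_card_sub_one_eq_one x hx0]
                congr 1
                omega
              rw [this]
              exact S.pow_mem hx _ }
      have hK : K = ⊤ := by
        apply subring_eq_top_of_sum K g hg0 hg hq7 h9 hodd
        have e : g ^ 2 + (g ^ 2)⁻¹ = 4 * ((g - g⁻¹) / 2) ^ 2 + 2 := by
          field_simp
          ring
        rw [e]
        have hmem : ((g - g⁻¹) / 2) ^ 2 ∈ K := Subring.subset_closure (Set.mem_singleton _)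
        exact add_mem (mul_mem (ofNat_mem K 4) hmem) (ofNat_mem K 2)
      rw [eq_top_iff]
      intro x _
      have : x ∈ K := by rw [hK]; trivial
      exact this
end

section
/- Let p be a prime, q = p^e a power of p, and F a finite field with |F| = q². (1) If q is odd and q ∉ {3, 5}, then there exist a, b ∈ F with a^{2q−1} + b^{2q−1} = 1 and a^{q+1} + b^{q+1} = 1, such that the F_p-subalgebra of F generated by a^{2q−1} is all of F, and the F_p-subalgebra of F generated by a^{q+1} has exactly q elements. (2) If q = 2^e with e ≥ 2, then there exist a, b ∈ F with a^{2q−1} + b^{2q−1} = 1 and a^{q+1} + b^{q+1} = 1, such that the F_p-subalgebra of F generated by a^{q+1} and the F_p-subalgebra of F generated by a^{2q−1} each have exactly q elements. -/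
theorem ufl_closure_lower {p : ℕ} [Fact p.Prime] {F : Type} [Field F] [Fintype F] [CharP F p]
    (x : F) (n : ℕ) (h : ∀ d, 1 ≤ d → x ^ p ^ d = x → n ≤ d) :
    p ^ n ≤ Nat.card (Subring.closure ({x} : Set F)) := by
  classical
  set K := Subring.closure ({x} : Set F) with hK
  haveI : Fintype K := Fintype.ofFinite _
  letI : Field K := Fintype.fieldOfDomain K
  haveI : CharP K p := inferInstance
  obtain ⟨d, hd, hcard⟩ := FiniteField.card K p
  rw [Nat.card_eq_fintype_card, hcard]
  apply Nat.pow_le_pow_right (Fact.out : p.Prime).pos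
  apply h _ d.pos
  have hx : x ∈ K := Subring.subset_closure rfl
  have := FiniteField.pow_card (⟨x, hx⟩ : K)
  rw [hcard] at this
  simpa using congrArg Subtype.val this

theorem ufl_closure_upper {p : ℕ} [Fact p.Prime] {F : Type} [Field F] [Fintype F] [CharP F p]
    (x : F) (n : ℕ) (hn : 1 ≤ n) (h : x ^ p ^ n = x) :
    Nat.card (Subring.closure ({x} : Set F)) ≤ p ^ n := by
  classical
  have h1 : 1 < p ^ n := Nat.one_lt_pow (by omega) (Fact.out : p.Prime).one_lt
  have hsub : ∀ y ∈ Subring.closure ({x} : Set F), y ^ p ^ n = y := by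
    intro y hy
    induction hy using Subring.closure_induction with
    | mem y hy => rw [Set.mem_singleton_iff.1 hy]; exact h
    | zero => exact zero_pow (by omega)
    | one => exact one_pow _
    | add a b _ _ ha hb => rw [add_pow_char_pow, ha, hb]
    | neg a _ ha =>
      have := map_neg (iterateFrobenius F p n) a
      simp only [iterateFrobenius_def] at this
      rw [this, ha]
    | mul a b _ _ ha hb => rw [mul_pow, ha, hb]
  let P : Polynomial F := Polynomial.X ^ (p ^ n) - Polynomial.X
  have hP : P ≠ 0 := FiniteField.X_pow_card_sub_X_ne_zero F h1
  have hdeg : P.natDegree = p ^ n := FiniteField.X_pow_card_sub_X_natDegree_eq F h1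
  have hs : ((Subring.closure ({x} : Set F) : Subring F) : Set F) ⊆ (P.roots.toFinset : Set F) := by
    intro y hy
    have := hsub y hy
    simp [hP, P, this]
  calc Nat.card (Subring.closure ({x} : Set F))
      = Set.ncard ((Subring.closure ({x} : Set F) : Subring F) : Set F) := rfl
    _ ≤ Set.ncard (P.roots.toFinset : Set F) := Set.ncard_le_ncard hs
    _ = P.roots.toFinset.card := Set.ncard_coe_finset _
    _ ≤ P.roots.card := Multiset.toFinset_card_le _
    _ ≤ P.natDegree := P.card_roots'
    _ = _ := hdeg

theorem ufl_closure_card {p : ℕ} [Fact p.Prime] {F : Type} [Field F] [Fintype F] [CharP F p]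
    (x : F) (n : ℕ) (hn : 1 ≤ n) (h0 : x ^ p ^ n = x)
    (h : ∀ d, 1 ≤ d → x ^ p ^ d = x → n ≤ d) :
    Nat.card (Subring.closure ({x} : Set F)) = p ^ n :=
  le_antisymm (ufl_closure_upper x n hn h0) (ufl_closure_lower x n h)

theorem ufl_gcd {p : ℕ} [Fact p.Prime] {F : Type} [Field F] [CharP F p]
    (x : F) (d e : ℕ) (hd : x ^ p ^ d = x) (he : x ^ p ^ e = x) :
    x ^ p ^ (Nat.gcd d e) = x := by
  have key : ∀ k, (frobenius F p)^[k] x = x ^ p ^ k := fun k => by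
    rw [← iterateFrobenius_def, coe_iterateFrobenius]
  have h1 : Function.IsPeriodicPt (frobenius F p) d x := (key d).trans hd
  have h2 : Function.IsPeriodicPt (frobenius F p) e x := (key e).trans he
  exact (key _).symm.trans (h1.gcd h2)

theorem ufl_gen {F : Type} [Field F] [Fintype F] (q : ℕ)
    (hF : Fintype.card F = q ^ 2) :
    ∃ g : F, g ≠ 0 ∧ ∀ k, g ^ k = 1 → (q ^ 2 - 1) ∣ k := by
  classical
  obtain ⟨g, hg⟩ := IsCyclic.exists_generator (α := Fˣ)
  refine ⟨g, g.ne_zero, fun k hk => ?_⟩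
  have h1 : orderOf g = q ^ 2 - 1 := by
    rw [orderOf_eq_card_of_forall_mem_zpowers hg, Nat.card_eq_fintype_card, Fintype.card_units, hF]
  rw [← h1]
  apply orderOf_dvd_of_pow_eq_one
  ext; simpa using hk

theorem ufl_arith (p e d q r s : ℕ) (hp : p.Prime) (ho : Odd p) (hq : q = p ^ e) (hd : 1 ≤ d)
    (hde : 2 * d ≤ e) (hr : r = p ^ d) (hs : s = r - 1 ∨ s = r + 1)
    (h : q + 1 ∣ 3 * s) : False := by
  have h2 : 3 ≤ p := by
    have := hp.two_le
    rcases ho with ⟨k, hk⟩; omega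
  have hpr : p ≤ r := by
    rw [hr]; exact Nat.le_self_pow (by omega) p
  have hrq : r * r ≤ q := by
    rw [hq, hr, ← pow_add]; exact Nat.pow_le_pow_right (by omega) (by omega)
  have hle : q + 1 ≤ 3 * s := Nat.le_of_dvd (by omega) h
  have hr3 : r = 3 := by
    have : s ≤ r + 1 := by omega
    nlinarith
  have hp3 : p = 3 := by omega
  have hco : Nat.Coprime (q + 1) 3 := by
    rw [Nat.coprime_comm, Nat.Prime.coprime_iff_not_dvd Nat.prime_three]
    intro hh
    have : 3 ∣ q := by rw [hq, hp3]; exact dvd_pow_self 3 (by omega)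
    omega
  have := Nat.le_of_dvd (by omega) (hco.dvd_of_dvd_mul_left h)
  subst hr3
  omega

theorem ufl_odd
    (p e : ℕ) (hp : p.Prime) (he : 1 ≤ e) (q : ℕ) (hq : q = p ^ e)
    (F : Type) [Field F] [Fintype F] (hF : Fintype.card F = q ^ 2) (ho : Odd q) (h5 : q ≠ 5) :
      ∃ a b : F, a ^ (2 * q - 1) + b ^ (2 * q - 1) = 1 ∧
        a ^ (q + 1) + b ^ (q + 1) = 1 ∧
        Subring.closure ({a ^ (2 * q - 1)} : Set F) = ⊤ ∧
        Nat.card (Subring.closure ({a ^ (q + 1)} : Set F)) = q := by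
  haveI : Fact p.Prime := ⟨hp⟩
  have hF2 : Fintype.card F = p ^ (e * 2) := by rw [hF, hq, pow_mul]
  haveI : CharP F p := charP_of_card_eq_prime_pow hF2
  have hop : Odd p := by
    rw [hq] at ho
    exact (Nat.odd_pow_iff (by omega)).1 ho
  have hp3 : 3 ≤ p := by
    have := hp.two_le
    rcases hop with ⟨k, hk⟩; omega
  have hpq : p ≤ q := by rw [hq]; exact Nat.le_self_pow (by omega) p
  have two_ne : (2 : F) ≠ 0 := by
    intro h
    have h' : ((2 : ℕ) : F) = 0 := by exact_mod_cast h
    rw [CharP.cast_eq_zero_iff F p] at h'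
    have := Nat.le_of_dvd (by omega) h'
    omega
  have four_ne : (4 : F) ≠ 0 := by
    have : (4 : F) = 2 * 2 := by norm_num
    rw [this]; exact mul_ne_zero two_ne two_ne
  obtain ⟨t, ht0, ht⟩ := ufl_gen q hF
  -- arithmetic of exponents
  have hqq : q ^ 2 - 1 = (q - 1) * (q + 1) := by
    obtain ⟨k, rfl⟩ : ∃ k, q = k + 1 := ⟨q - 1, by omega⟩
    simp only [Nat.add_sub_cancel]
    have : (k + 1) ^ 2 = k * (k + 1 + 1) + 1 := by ring
    omega
  set T := t ^ q with hT
  have hT0 : T ≠ 0 := pow_ne_zero _ ht0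
  set w := t ^ (3 * (q - 1)) with hw
  have hw0 : w ≠ 0 := pow_ne_zero _ ht0
  have hwT : w * t ^ 3 = T ^ 3 := by
    rw [hw, hT, ← pow_add, ← pow_mul]; congr 1; omega
  have hword : ∀ k, w ^ k = 1 → q + 1 ∣ 3 * k := by
    intro k hk
    rw [hw, ← pow_mul] at hk
    have := ht _ hk
    rw [hqq, show 3 * (q - 1) * k = (q - 1) * (3 * k) by ring] at this
    exact Nat.dvd_of_mul_dvd_mul_left (by omega) this
  have hw2 : w ^ 2 ≠ 1 := by
    intro h
    have h6 := hword 2 h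
    have := Nat.le_of_dvd (by omega) h6
    have : q = 3 ∨ q = 4 := by omega
    rcases this with h | h
    · rw [h] at h6; omega
    · rw [h] at ho; exact absurd ho (by decide)
  have hTT : T ^ q = t := by
    rw [hT, ← pow_mul, ← sq, ← hF, FiniteField.pow_card]
  let φ := iterateFrobenius F p e
  have hφ : ∀ x, x ^ q = φ x := fun x => by rw [hq]; rfl
  have hφt : φ t = T := by rw [← hφ]
  have hφT : φ T = t := by rw [← hφ, hTT]
  have hφw : φ w * w = 1 := by
    have h1 := congrArg φ hwT
    simp only [map_mul, map_pow, hφt, hφT] at h1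
    have : (φ w * w) * (t ^ 3 * T ^ 3) = t ^ 3 * T ^ 3 := by
      linear_combination w * t ^ 3 * h1 + t ^ 3 * hwT
    exact mul_right_cancel₀ (mul_ne_zero (pow_ne_zero 3 ht0) (pow_ne_zero 3 hT0))
      (this.trans (one_mul _).symm)
  have hwq : w ^ q = w⁻¹ := by
    rw [hφ]; exact eq_inv_of_mul_eq_one_left hφw
  set x := w + w⁻¹ with hx
  have hxq : x ^ p ^ e = x := by
    rw [← hq, hφ, hx, map_add, map_inv₀, ← hφ, hwq, inv_inv, add_comm]
  -- minimality for x
  have hmin : ∀ d, 1 ≤ d → x ^ p ^ d = x → e ∣ d := by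
    intro d hd hxd
    have hg := ufl_gcd x d e hxd hxq
    set d0 := Nat.gcd d e with hd0
    have hd0e : d0 ∣ e := Nat.gcd_dvd_right d e
    have hd0d : d0 ∣ d := Nat.gcd_dvd_left d e
    have hd0pos : 1 ≤ d0 := Nat.gcd_pos_of_pos_left _ hd
    obtain ⟨k, hk⟩ := hd0e
    by_cases hk1 : k = 1
    · rw [hk1, mul_one] at hk; rw [hk]; exact hd0d
    exfalso
    have hk2 : 2 ≤ k := by
      rcases k with _ | _ | k
      · omega
      · omega
      · omega
    have hde : 2 * d0 ≤ e := by rw [hk]; nlinarith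
    have hrpos : 1 ≤ p ^ d0 := Nat.one_le_pow _ _ (by omega)
    have hmain : (w ^ p ^ d0 - w) * (w ^ p ^ d0 * w - 1) = 0 := by
      rw [hx, add_pow_char_pow, inv_pow] at hg
      have hW : w ^ p ^ d0 ≠ 0 := pow_ne_zero _ hw0
      generalize w ^ p ^ d0 = W at hg hW
      field_simp at hg
      linear_combination hg
    rcases mul_eq_zero.1 hmain with h | h
    · have h1 : w ^ (p ^ d0 - 1) = 1 := by
        apply mul_right_cancel₀ hw0
        rw [← pow_succ, Nat.sub_add_cancel hrpos, one_mul]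
        exact sub_eq_zero.1 h
      exact ufl_arith p e d0 q _ _ hp hop hq hd0pos hde rfl (Or.inl rfl) (hword _ h1)
    · have h1 : w ^ (p ^ d0 + 1) = 1 := by
        rw [pow_succ]; exact sub_eq_zero.1 h
      exact ufl_arith p e d0 q _ _ hp hop hq hd0pos hde rfl (Or.inr rfl) (hword _ h1)
  have hw1 : w ≠ 1 := fun h => hw2 (by rw [h, one_pow])
  have hwn1 : w ≠ -1 := fun h => hw2 (by rw [h]; ring)
  have ht3 : t ^ 3 ≠ 0 := pow_ne_zero _ ht0
  set c := (t ^ 3 + T ^ 3) / 2 with hc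
  set f := (t ^ 3 - T ^ 3) / 2 with hf
  have hcw : c = t ^ 3 * ((1 + w) / 2) := by rw [hc, ← hwT]; ring
  have hfw : f = t ^ 3 * ((1 - w) / 2) := by rw [hf, ← hwT]; ring
  have hc0 : c ≠ 0 := by
    rw [hcw]
    refine mul_ne_zero ht3 (div_ne_zero ?_ two_ne)
    intro h; exact hwn1 (by linear_combination h)
  have hf0 : f ≠ 0 := by
    rw [hfw]
    refine mul_ne_zero ht3 (div_ne_zero ?_ two_ne)
    intro h; exact hw1 (by linear_combination -h)
  have hφc : φ c = c := by
    simp only [hc, map_div₀, map_add, map_pow, hφt, hφT, map_ofNat]; ring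
  have hφf : φ f = -f := by
    simp only [hf, map_div₀, map_sub, map_pow, hφt, hφT, map_ofNat]; ring
  set a := c / (t * T ^ 2) with ha
  set b := f / (t * T ^ 2) with hb
  have ha0 : a ≠ 0 := div_ne_zero hc0 (mul_ne_zero ht0 (pow_ne_zero _ hT0))
  have hb0 : b ≠ 0 := div_ne_zero hf0 (mul_ne_zero ht0 (pow_ne_zero _ hT0))
  have haq : a ^ q = c / (T * t ^ 2) := by
    rw [hφ, ha]; simp only [map_div₀, map_mul, map_pow, hφt, hφT, hφc]
  have hbq : b ^ q = -f / (T * t ^ 2) := by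
    rw [hφ, hb]; simp only [map_div₀, map_mul, map_pow, hφt, hφT, hφf]
  have hpow : ∀ y : F, y ^ (2 * q - 1) * y = (y ^ q) ^ 2 := fun y => by
    rw [← pow_succ, ← pow_mul]; congr 1; omega
  have ha2 : a ^ (2 * q - 1) = (1 + w) / 2 := by
    apply mul_right_cancel₀ ha0
    have : (1 + w) / 2 = c / t ^ 3 := by rw [hcw]; field_simp
    rw [hpow, haq, this, ha]
    clear_value c T
    field_simp
  have hb2 : b ^ (2 * q - 1) = (1 - w) / 2 := by
    apply mul_right_cancel₀ hb0
    have : (1 - w) / 2 = f / t ^ 3 := by rw [hfw]; field_simp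
    rw [hpow, hbq, this, hb]
    clear_value f T
    field_simp
  have hT3 : T ^ 3 ≠ 0 := pow_ne_zero _ hT0
  have haN : a ^ (q + 1) = (2 + x) / 4 := by
    have h1 : a ^ (q + 1) = c ^ 2 / (t ^ 3 * T ^ 3) := by
      rw [pow_succ, haq, ha]
      clear_value c T
      field_simp
    rw [h1, hcw, ← hwT, hx]
    field_simp
    ring
  have hbN : b ^ (q + 1) = (2 - x) / 4 := by
    have h1 : b ^ (q + 1) = - f ^ 2 / (t ^ 3 * T ^ 3) := by
      rw [pow_succ, hbq, hb]
      clear_value f T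
      field_simp
    rw [h1, hfw, ← hwT, hx]
    field_simp
    ring
  refine ⟨a, b, ?_, ?_, ?_, ?_⟩
  · rw [ha2, hb2]; field_simp; ring
  · rw [haN, hbN]; field_simp; ring
  · rw [ha2]
    have hlow : p ^ (e * 2) ≤ Nat.card (Subring.closure ({(1 + w) / 2} : Set F)) := by
      apply ufl_closure_lower
      intro d hd hu
      have hwd : w ^ p ^ d = w := by
        rw [← iterateFrobenius_def, map_div₀, map_add, map_one, map_ofNat, iterateFrobenius_def] at hu
        field_simp at hu
        linear_combination hu
      have hxd : x ^ p ^ d = x := by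
        rw [hx, add_pow_char_pow, inv_pow, hwd]
      obtain ⟨k, hk⟩ := hmin d hd hxd
      by_cases hk1 : k = 1
      · exfalso
        rw [hk, hk1, mul_one, ← hq, hwq] at hwd
        apply hw2
        rw [sq]; nth_rewrite 1 [← hwd]; exact inv_mul_cancel₀ hw0
      · have hk2 : 2 ≤ k := by
          rcases k with _ | _ | k
          · omega
          · omega
          · omega
        rw [hk]; exact Nat.mul_le_mul_left _ hk2
    rw [← hF2, ← Nat.card_eq_fintype_card] at hlow
    apply SetLike.coe_injective
    rw [Subring.coe_top]
    apply Set.eq_of_subset_of_ncard_le (Set.subset_univ _)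
    rw [Set.ncard_univ]
    exact hlow
  · rw [haN, hq]
    apply ufl_closure_card _ _ he
    · rw [← iterateFrobenius_def, map_div₀, map_add, map_ofNat, map_ofNat, iterateFrobenius_def, hxq]
    · intro d hd hu
      apply Nat.le_of_dvd hd
      apply hmin d hd
      rw [← iterateFrobenius_def, map_div₀, map_add, map_ofNat, map_ofNat, iterateFrobenius_def] at hu
      field_simp at hu
      linear_combination hu

theorem ufl_even
    (e : ℕ) (he : 2 ≤ e) (q : ℕ) (hq : q = 2 ^ e)
    (F : Type) [Field F] [Fintype F] (hF : Fintype.card F = q ^ 2) :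
      ∃ a b : F, a ^ (2 * q - 1) + b ^ (2 * q - 1) = 1 ∧
        a ^ (q + 1) + b ^ (q + 1) = 1 ∧
        Nat.card (Subring.closure ({a ^ (q + 1)} : Set F)) = q ∧
        Nat.card (Subring.closure ({a ^ (2 * q - 1)} : Set F)) = q := by
  haveI : Fact (Nat.Prime 2) := ⟨Nat.prime_two⟩
  have hF2 : Fintype.card F = 2 ^ (e * 2) := by rw [hF, hq, pow_mul]
  haveI : CharP F 2 := charP_of_card_eq_prime_pow hF2
  obtain ⟨t, ht0, ht⟩ := ufl_gen q hF
  have hq4 : 4 ≤ q := by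
    rw [hq]; exact Nat.pow_le_pow_right (n := 2) (by omega) he
  have hqq : q ^ 2 - 1 = (q - 1) * (q + 1) := by
    obtain ⟨k, rfl⟩ : ∃ k, q = k + 1 := ⟨q - 1, by omega⟩
    simp only [Nat.add_sub_cancel]
    have : (k + 1) ^ 2 = k * (k + 1 + 1) + 1 := by ring
    omega
  set a := t ^ (q + 1) with ha
  have ha0 : a ≠ 0 := pow_ne_zero _ ht0
  have haq : a ^ q = a := by
    rw [ha, ← pow_mul, show (q + 1) * q = q ^ 2 + q by ring, pow_add, ← hF, FiniteField.pow_card]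
    ring
  have hq1 : ∀ y : F, y ^ q = y → y ^ (2 * q - 1) = y := by
    intro y hy
    rw [show 2 * q - 1 = q + (q - 1) by omega, pow_add, hy, ← pow_succ', Nat.sub_add_cancel (by omega), hy]
  have hq2 : ∀ y : F, y ^ q = y → y ^ (q + 1) = y ^ 2 := by
    intro y hy
    rw [pow_succ, hy, sq]
  have hbq : (1 + a) ^ q = 1 + a := by
    rw [hq, add_pow_char_pow, one_pow, ← hq, haq]
  have htwo : (2 : F) = 0 := CharTwo.two_eq_zero
  have hmin : ∀ d, 1 ≤ d → a ^ 2 ^ d = a → e ≤ d := by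
    intro d hd h
    have h2 : 2 ≤ 2 ^ d := Nat.le_self_pow (by omega) 2
    have h1 : a ^ (2 ^ d - 1) = 1 := by
      apply mul_right_cancel₀ ha0
      rw [← pow_succ, Nat.sub_add_cancel (by omega), one_mul, h]
    rw [ha, ← pow_mul] at h1
    have h3 := ht _ h1
    rw [hqq, mul_comm] at h3
    have h4 := Nat.le_of_dvd (by omega) (Nat.dvd_of_mul_dvd_mul_left (by omega) h3)
    have h5 : 2 ^ e ≤ 2 ^ d := by omega
    exact (Nat.pow_le_pow_iff_right (by omega)).1 h5
  refine ⟨a, 1 + a, ?_, ?_, ?_, ?_⟩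
  · rw [hq1 _ haq, hq1 _ hbq]; linear_combination a * htwo
  · rw [hq2 _ haq, hq2 _ hbq]; linear_combination (a ^ 2 + a) * htwo
  · rw [hq2 _ haq, hq]
    apply ufl_closure_card _ _ (by omega)
    · rw [← hq, ← pow_mul, mul_comm, pow_mul, haq]
    · intro d hd h
      apply hmin d hd
      apply frobenius_inj F 2
      simp only [frobenius_def]
      rw [← h]; ring
  · rw [hq1 _ haq, hq]
    exact ufl_closure_card _ _ (by omega) (by rw [← hq, haq]) hmin


/-- Let `q = p^e` and let `F` be a finite field with `|F| = q²`.
(1) If `q` is odd and `q ∉ {3, 5}`, there are `a, b ∈ F` with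
`a^{2q-1} + b^{2q-1} = 1` and `a^{q+1} + b^{q+1} = 1` such that `a^{2q-1}` generates `F`
over the prime field and the prime-field subring generated by `a^{q+1}` has exactly `q`
elements.
(2) If `q = 2^e` with `e ≥ 2`, there are such `a, b` for which the prime-field subrings
generated by `a^{q+1}` and by `a^{2q-1}` each have exactly `q` elements. -/
theorem unitary_field_lemma
    (p e : ℕ) (hp : p.Prime) (he : 1 ≤ e) (q : ℕ) (hq : q = p ^ e)
    (F : Type) [Field F] [Fintype F] (hF : Fintype.card F = q ^ 2) :
    (Odd q → q ≠ 3 → q ≠ 5 →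
      ∃ a b : F, a ^ (2 * q - 1) + b ^ (2 * q - 1) = 1 ∧
        a ^ (q + 1) + b ^ (q + 1) = 1 ∧
        Subring.closure ({a ^ (2 * q - 1)} : Set F) = ⊤ ∧
        Nat.card (Subring.closure ({a ^ (q + 1)} : Set F)) = q) ∧
    (p = 2 → 2 ≤ e →
      ∃ a b : F, a ^ (2 * q - 1) + b ^ (2 * q - 1) = 1 ∧
        a ^ (q + 1) + b ^ (q + 1) = 1 ∧
        Nat.card (Subring.closure ({a ^ (q + 1)} : Set F)) = q ∧
        Nat.card (Subring.closure ({a ^ (2 * q - 1)} : Set F)) = q) := by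
  refine ⟨fun ho _ h5 => ufl_odd p e hp he q hq F hF ho h5, fun h2 he2 => ?_⟩
  subst h2
  exact ufl_even e he2 q hq F hF
end

section
/- There is a constant C such that for every finite field F with |F| = q, each of the groups SL(2, F), PSL(2, F) (the quotient of SL(2, F) by its center), and PGL(2, F) (the quotient of GL(2, F) by its center) has a presentation with at most C generators and at most C relators whose length is at most C·(1 + log₂ q). -/
/-- `G` has a presentation with at most `g` generators, at most `r` relators, and
length (number of generators plus the total length of the reduced relator words) at
most `L`. -/
def HasBoundedPresentation (G : Type) [Group G] (g r : ℕ) (L : ℝ) : Prop :=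
  ∃ (m : ℕ) (π : FreeGroup (Fin m) →* G) (R : Finset (FreeGroup (Fin m))),
    m ≤ g ∧ Function.Surjective π ∧ R.card ≤ r ∧
    π.ker = Subgroup.normalClosure (R : Set (FreeGroup (Fin m))) ∧
    ((m + ∑ w ∈ R, FreeGroup.norm w : ℕ) : ℝ) ≤ L


/-! ## Words -/

/-- Horner word for an integer given by its digits. -/
def numW {G : Type*} [Group G] (u d : G) : List ℕ → G
  | [] => 1
  | c :: cs => u ^ c * (d * numW u d cs * d⁻¹)

/-- Horner word for a polynomial with coefficients given by digits. -/
def polW {G : Type*} [Group G] (u d a : G) : List (List ℕ) → G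
  | [] => 1
  | c :: cs => numW u d c * (a * polW u d a cs * a⁻¹)

/-- The integer polynomial attached to a list of digit lists. -/
noncomputable def toPoly (B : ℕ) : List (List ℕ) → Polynomial ℤ
  | [] => 0
  | c :: cs => Polynomial.C ((Nat.ofDigits B c : ℕ) : ℤ) + Polynomial.X * toPoly B cs

theorem map_numW {G H : Type*} [Group G] [Group H] (f : G →* H) (u d : G) (l : List ℕ) :
    f (numW u d l) = numW (f u) (f d) l := by
  induction l with
  | nil => simp [numW]
  | cons c cs ih => simp [numW, ih]

theorem map_polW {G H : Type*} [Group G] [Group H] (f : G →* H) (u d a : G)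
    (l : List (List ℕ)) : f (polW u d a l) = polW (f u) (f d) (f a) l := by
  induction l with
  | nil => simp [polW]
  | cons c cs ih => simp [polW, ih, map_numW]

theorem numW_eq {G : Type*} [Group G] (u d : G) (B : ℕ) (hd : d * u * d⁻¹ = u ^ B)
    (l : List ℕ) : numW u d l = u ^ (Nat.ofDigits B l) := by
  induction l with
  | nil => simp [numW]
  | cons c cs ih =>
    have h1 : d * u ^ (Nat.ofDigits B cs) * d⁻¹ = (d * u * d⁻¹) ^ (Nat.ofDigits B cs) := by
      rw [conj_pow]
    rw [numW, ih, h1, hd, ← pow_mul, ← pow_add, Nat.ofDigits_cons]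

/-! ## The Baumslag trick -/

theorem baumslag {G : Type*} [Group G] (u a b : G) (hab : a * b = b * a)
    (h1 : Commute u (a * u * a⁻¹)) (h2 : b * u * b⁻¹ = u * (a * u * a⁻¹)) (i j : ℕ) :
    Commute (a ^ i * u * (a ^ i)⁻¹) (a ^ j * u * (a ^ j)⁻¹) := by
  set x : ℕ → G := fun i => a ^ i * u * (a ^ i)⁻¹ with hx
  have hshift : ∀ i k, a ^ k * x i * (a ^ k)⁻¹ = x (i + k) := by
    intro i k
    simp only [hx]
    rw [add_comm i k, pow_add]; group
  have hcs : ∀ i j k, Commute (x i) (x j) → Commute (x (i + k)) (x (j + k)) := by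
    intro i j k h
    rw [← hshift, ← hshift]
    exact (Commute.conj_iff (a ^ k)).2 h
  have hbx : ∀ i, b * x i * b⁻¹ = x i * x (i + 1) := by
    intro i
    have hc : Commute b (a ^ i) := (Commute.pow_right (show Commute b a from hab.symm) i)
    have : b * x i * b⁻¹ = a ^ i * (b * u * b⁻¹) * (a ^ i)⁻¹ := by
      simp only [hx]
      have e1 : b * a ^ i = a ^ i * b := hc
      have e2 : (a ^ i)⁻¹ * b⁻¹ = b⁻¹ * (a ^ i)⁻¹ := by
        rw [← mul_inv_rev, ← mul_inv_rev, e1]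
      calc b * (a ^ i * u * (a ^ i)⁻¹) * b⁻¹ = (b * a ^ i) * u * ((a ^ i)⁻¹ * b⁻¹) := by group
        _ = _ := by rw [e1, e2]; group
    rw [this, h2]
    simp only [hx]
    rw [pow_succ]; group
  have key : ∀ n, ∀ i ≤ n + 1, Commute (x 0) (x i) := by
    intro n
    induction n with
    | zero =>
      intro i hi
      interval_cases i
      · exact Commute.refl _
      · simpa [hx] using h1
    | succ n ih =>
      intro i hi
      rcases Nat.lt_or_ge i (n + 2) with h | h
      · exact ih i (by omega)
      obtain rfl : i = n + 2 := by omega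
      have c0 : Commute (x 0) (x (n + 1)) := ih _ le_rfl
      have c1 : Commute (x 1) (x (n + 1)) := by
        have := hcs 0 n 1 (ih n (by omega)); simpa using this
      have c2 : Commute (x 1) (x (n + 2)) := by
        have := hcs 0 (n + 1) 1 c0; simpa using this
      have c3 : Commute (x 0 * x 1) (x (n + 1) * x (n + 2)) := by
        have := (Commute.conj_iff b).2 c0
        rwa [hbx, hbx] at this
      have c4 : Commute (x 0) (x (n + 1) * x (n + 2)) := by
        have := c3.mul_left (c1.mul_right c2).inv_left
        simpa using this
      have := c0.inv_right.mul_right c4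
      simpa using this
  rcases le_total i j with h | h
  · have := hcs 0 (j - i) i (key (j - i) _ (by omega))
    simpa [Nat.sub_add_cancel h] using this
  · have := hcs 0 (i - j) j (key (i - j) _ (by omega))
    rw [Nat.sub_add_cancel h, zero_add] at this
    exact this.symm

/-! ## The unipotent subgroup -/

theorem exists_phi {G : Type*} [Group G] (u a : G)
    (hc : ∀ i j : ℕ, Commute (a ^ i * u * (a ^ i)⁻¹) (a ^ j * u * (a ^ j)⁻¹)) :
    ∃ φ : Polynomial ℤ →+ Additive G, ∀ (i : ℕ) (n : ℤ),
      φ (Polynomial.monomial i n) = Additive.ofMul (a ^ i * u ^ n * (a ^ i)⁻¹) := by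
  set x : ℕ → G := fun i => a ^ i * u * (a ^ i)⁻¹ with hx
  let V := Subgroup.closure (Set.range x)
  have hV : IsMulCommutative V := Subgroup.isMulCommutative_closure (by
    rintro _ ⟨i, rfl⟩ _ ⟨j, rfl⟩; exact hc i j)
  let instV : CommGroup V :=
    { (inferInstance : Group V) with mul_comm := hV.is_comm.comm }
  let y : ℕ → Additive V := fun i => Additive.ofMul ⟨x i, Subgroup.subset_closure ⟨i, rfl⟩⟩
  let φV : Polynomial ℤ →+ Additive V := AddMonoidHom.mk' (fun P => P.sum fun i n => n • y i) (by
    intro P Q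
    exact Polynomial.sum_add_index P Q (fun i (n : ℤ) => n • y i) (by simp) (by intro i m n; exact add_smul m n (y i)))
  refine ⟨(MonoidHom.toAdditive V.subtype).comp φV, ?_⟩
  intro i n
  have : φV (Polynomial.monomial i n) = n • y i := by
    show (Polynomial.monomial i n).sum (fun i (n : ℤ) => n • y i) = n • y i
    exact Polynomial.sum_monomial_index n (fun i (n : ℤ) => n • y i) (by simp)
  rw [AddMonoidHom.comp_apply, this, map_zsmul]
  show Additive.ofMul ((x i) ^ n) = _
  rw [hx]; simp only [conj_zpow]

theorem exists_psi {G : Type*} [Group G] (u d a : G) {F : Type*} [Field F]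
    (hc : ∀ i j : ℕ, Commute (a ^ i * u * (a ^ i)⁻¹) (a ^ j * u * (a ^ j)⁻¹))
    (B p : ℕ) (lf : List (List ℕ)) (σ : F)
    (hd : d * u * d⁻¹ = u ^ B) (hup : u ^ p = 1) (hf : polW u d a lf = 1)
    (c : F → List (List ℕ)) (hcx : ∀ x, Polynomial.aeval σ (toPoly B (c x)) = x)
    (hker : ∀ P : Polynomial ℤ, Polynomial.aeval σ P = 0 →
      ∃ Q R, P = toPoly B lf * Q + Polynomial.C (p : ℤ) * R) :
    ∃ ψ : F → G, ψ 1 = u ∧ (∀ x y, ψ (x + y) = ψ x * ψ y) ∧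
      (∀ t z, t * a = a * t → t * u * t⁻¹ = ψ z → ∀ x, t * ψ x * t⁻¹ = ψ (z * x)) ∧
      (∀ x, polW u d a (c x) = ψ x) := by
  obtain ⟨φ, hφ⟩ := exists_phi u a hc
  -- multiplication by `X`
  have hX : ∀ P, φ (Polynomial.X * P) = Additive.ofMul (a * (φ P).toMul * a⁻¹) := by
    let f1 : Polynomial ℤ →+ Additive G := φ.comp (AddMonoidHom.mulLeft Polynomial.X)
    let f2 : Polynomial ℤ →+ Additive G :=
      (MonoidHom.toAdditive (MulAut.conj a).toMonoidHom).comp φ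
    have : f1 = f2 := by
      apply Polynomial.addHom_ext
      intro n m
      show φ (Polynomial.X * Polynomial.monomial n m) =
        Additive.ofMul (a * (φ (Polynomial.monomial n m)).toMul * a⁻¹)
      rw [Polynomial.X_mul_monomial, hφ, hφ]
      congr 1
      rw [toMul_ofMul, pow_succ']; group
    intro P
    exact DFunLike.congr_fun this P
  have hXn : ∀ n P, φ (P * Polynomial.X ^ n) =
      Additive.ofMul (a ^ n * (φ P).toMul * (a ^ n)⁻¹) := by
    intro n
    induction n with
    | zero => intro P; simp
    | succ n ih =>
      intro P
      rw [pow_succ, ← mul_assoc, mul_comm, hX, ih]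
      congr 1
      rw [toMul_ofMul, pow_succ']; group
  have hpol : ∀ ls, polW u d a ls = (φ (toPoly B ls)).toMul := by
    intro ls
    induction ls with
    | nil => simp [polW, toPoly]
    | cons l ls ih =>
      rw [polW, toPoly, map_add, hX, ← ih, numW_eq u d B hd, ← Polynomial.monomial_zero_left, hφ]
      simp
  have hkill1 : ∀ R, φ (Polynomial.C (p : ℤ) * R) = 0 := by
    have : φ.comp (AddMonoidHom.mulLeft (Polynomial.C (p : ℤ))) = 0 := by
      apply Polynomial.addHom_ext
      intro n m
      show φ (Polynomial.C (p : ℤ) * Polynomial.monomial n m) = 0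
      rw [Polynomial.C_mul_monomial, hφ, zpow_mul, zpow_natCast, hup]
      simp
    intro R
    exact DFunLike.congr_fun this R
  have hkill2 : ∀ R, φ (toPoly B lf * R) = 0 := by
    have h0 : φ (toPoly B lf) = 0 := by
      have := hpol lf
      rw [hf] at this
      exact this.symm
    have : φ.comp (AddMonoidHom.mulLeft (toPoly B lf)) = 0 := by
      apply Polynomial.addHom_ext
      intro n m
      show φ (toPoly B lf * Polynomial.monomial n m) = 0
      have e : toPoly B lf * Polynomial.monomial n m = m • (toPoly B lf * Polynomial.X ^ n) := by
        rw [← Polynomial.C_mul_X_pow_eq_monomial, Polynomial.smul_eq_C_mul]; ring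
      rw [e, map_zsmul, hXn, h0]
      simp
    intro R
    exact DFunLike.congr_fun this R
  have hwd : ∀ P Q : Polynomial ℤ, Polynomial.aeval σ P = Polynomial.aeval σ Q → φ P = φ Q := by
    intro P Q h
    obtain ⟨S, R, e⟩ := hker (P - Q) (by rw [map_sub, h, sub_self])
    have : φ (P - Q) = 0 := by rw [e, map_add, hkill1, hkill2, add_zero]
    rw [map_sub, sub_eq_zero] at this
    exact this
  let g : F → Polynomial ℤ := fun x => toPoly B (c x)
  have hg : ∀ x, Polynomial.aeval σ (g x) = x := hcx
  have hψ : ∀ P, φ (g (Polynomial.aeval σ P)) = φ P := fun P => hwd _ _ (hg _)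
  refine ⟨fun x => (φ (g x)).toMul, ?_, ?_, ?_, ?_⟩
  · have := hψ 1
    rw [map_one] at this
    show (φ (g 1)).toMul = u
    rw [this, ← Polynomial.monomial_zero_one, hφ]
    simp
  · intro x y
    have := hψ (g x + g y)
    rw [map_add, hg, hg] at this
    show (φ (g (x + y))).toMul = _
    rw [this, map_add]; rfl
  · intro t z hta htu x
    have : ∀ P, Additive.ofMul (t * (φ P).toMul * t⁻¹) = φ (g z * P) := by
      let f1 : Polynomial ℤ →+ Additive G := φ.comp (AddMonoidHom.mulLeft (g z))
      let f2 : Polynomial ℤ →+ Additive G :=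
        (MonoidHom.toAdditive (MulAut.conj t).toMonoidHom).comp φ
      have : f2 = f1 := by
        apply Polynomial.addHom_ext
        intro n m
        show Additive.ofMul (t * (φ (Polynomial.monomial n m)).toMul * t⁻¹) =
          φ (g z * Polynomial.monomial n m)
        have e : g z * Polynomial.monomial n m = m • (g z * Polynomial.X ^ n) := by
          rw [← Polynomial.C_mul_X_pow_eq_monomial, Polynomial.smul_eq_C_mul]; ring
        rw [e, map_zsmul, hXn, hφ, ← ofMul_zpow]
        congr 1
        rw [toMul_ofMul]
        have htu' : t * u * t⁻¹ = (φ (g z)).toMul := htu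
        rw [← htu']
        have e1 : t * a ^ n = a ^ n * t := (Commute.pow_right (show Commute t a from hta) n)
        have e2 : (a ^ n)⁻¹ * t⁻¹ = t⁻¹ * (a ^ n)⁻¹ := by
          rw [← mul_inv_rev, ← mul_inv_rev, e1]
        rw [conj_zpow, conj_zpow]
        calc t * (a ^ n * u ^ m * (a ^ n)⁻¹) * t⁻¹
            = (t * a ^ n) * u ^ m * ((a ^ n)⁻¹ * t⁻¹) := by group
          _ = _ := by rw [e1, e2]; group
      intro P
      exact DFunLike.congr_fun this P
    have h3 := this (g x)
    have h4 := hψ (g z * g x)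
    rw [map_mul, hg, hg] at h4
    show t * (φ (g x)).toMul * t⁻¹ = (φ (g (z * x))).toMul
    rw [h4, ← h3]; rfl
  · intro x
    exact hpol _

/-! ## The relators -/

/-- Data attached to a finite field used to write down the presentation. -/
structure PData (F : Type*) [Field F] where
  p : ℕ
  B : ℕ
  lp : List ℕ
  lf : List (List ℕ)
  c : F → List (List ℕ)
  s : F
  r : F
  e : F
  z : F
  hp : (p : F) = 0
  hlp : Nat.ofDigits B lp = p
  hs : s ≠ 0
  hr : r ≠ 0
  he : e ≠ 0
  hz : z ≠ 0
  heB : e ^ 2 = (B : F)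
  hrs : r ^ 2 = 1 + s ^ 2
  hgen : ∀ x : F, x ≠ 0 → ∃ n : ℕ, z ^ n = x
  hc : ∀ x, Polynomial.aeval (s ^ 2) (toPoly B (c x)) = x
  hlf : Polynomial.aeval (s ^ 2) (toPoly B lf) = 0
  hker : ∀ P : Polynomial ℤ, Polynomial.aeval (s ^ 2) P = 0 →
      ∃ Q R, P = toPoly B lf * Q + Polynomial.C (p : ℤ) * R

/-- The word for the monomial matrix attached to `x`. -/
def wW {F : Type*} [Field F] (D : PData F) {G : Type*} [Group G] (u w a d : G) (x : F) : G :=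
  polW u d a (D.c x) * w⁻¹ * polW u d a (D.c x⁻¹) * w * polW u d a (D.c x)

/-- The relators of the presentation of `SL(2, F)`. -/
def rels {F : Type*} [Field F] (D : PData F) {G : Type*} [Group G] (u w a b d h : G) : List G :=
  [a * b * a⁻¹ * b⁻¹,
   h * a * h⁻¹ * a⁻¹,
   u * (a * u * a⁻¹) * u⁻¹ * (a * u * a⁻¹)⁻¹,
   b * u * b⁻¹ * (u * (a * u * a⁻¹))⁻¹,
   d * u * d⁻¹ * (u ^ D.B)⁻¹,
   numW u d D.lp,
   polW u d a D.lf,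
   h * u * h⁻¹ * (polW u d a (D.c (D.z ^ 2)))⁻¹,
   w * h * w⁻¹ * h,
   u * w⁻¹ * u * w * u * w⁻¹,
   wW D u w a d D.s * (a * w)⁻¹,
   wW D u w a d D.r * (b * w)⁻¹,
   wW D u w a d D.e * (d * w)⁻¹,
   wW D u w a d D.z * (h * w)⁻¹]

theorem map_wW {F : Type*} [Field F] (D : PData F) {G H : Type*} [Group G] [Group H]
    (f : G →* H) (u w a d : G) (x : F) :
    f (wW D u w a d x) = wW D (f u) (f w) (f a) (f d) x := by
  simp [wW, map_polW]

theorem map_rels {F : Type*} [Field F] (D : PData F) {G H : Type*} [Group G] [Group H]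
    (f : G →* H) (u w a b d h : G) :
    (rels D u w a b d h).map f = rels D (f u) (f w) (f a) (f b) (f d) (f h) := by
  simp [rels, map_wW, map_polW, map_numW]

/-! ## Matrices -/

/-- Upper unipotent matrix. -/
def mU {F : Type*} [Field F] (x : F) : Matrix.SpecialLinearGroup (Fin 2) F :=
  ⟨!![1, x; 0, 1], by simp [Matrix.det_fin_two]⟩

/-- Diagonal matrix. -/
def mH {F : Type*} [Field F] (x : F) (hx : x ≠ 0) : Matrix.SpecialLinearGroup (Fin 2) F :=
  ⟨!![x, 0; 0, x⁻¹], by simp [Matrix.det_fin_two, hx]⟩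

/-- The Weyl element. -/
def mW (F : Type*) [Field F] : Matrix.SpecialLinearGroup (Fin 2) F :=
  ⟨!![0, 1; -1, 0], by simp [Matrix.det_fin_two]⟩

theorem mU_coe {F : Type*} [Field F] (x : F) :
    (mU x : Matrix (Fin 2) (Fin 2) F) = !![1, x; 0, 1] := rfl

theorem mH_coe {F : Type*} [Field F] (x : F) (hx : x ≠ 0) :
    (mH x hx : Matrix (Fin 2) (Fin 2) F) = !![x, 0; 0, x⁻¹] := rfl

theorem mW_coe (F : Type*) [Field F] :
    (mW F : Matrix (Fin 2) (Fin 2) F) = !![0, 1; -1, 0] := rfl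

theorem mU_mul {F : Type*} [Field F] (x y : F) : mU x * mU y = mU (x + y) := by
  ext i j
  fin_cases i <;> fin_cases j <;> simp [mU_coe, mH_coe, mW_coe, add_comm]

theorem mU_zero {F : Type*} [Field F] : mU (0 : F) = 1 := by
  ext i j
  fin_cases i <;> fin_cases j <;> simp [mU]

theorem mU_pow {F : Type*} [Field F] (n : ℕ) : (mU (1 : F)) ^ n = mU (n : F) := by
  induction n with
  | zero => simp [mU_zero]
  | succ n ih => rw [pow_succ, ih, mU_mul]; simp

theorem mH_mU {F : Type*} [Field F] (t : F) (ht : t ≠ 0) (x : F) :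
    mH t ht * mU x * (mH t ht)⁻¹ = mU (t ^ 2 * x) := by
  rw [mul_inv_eq_iff_eq_mul]
  ext i j
  fin_cases i <;> fin_cases j <;> simp [mU_coe, mH_coe, mW_coe] <;>
    (try field_simp)

theorem mH_mul {F : Type*} [Field F] (s t : F) (hs : s ≠ 0) (ht : t ≠ 0) :
    mH s hs * mH t ht = mH (s * t) (mul_ne_zero hs ht) := by
  ext i j
  fin_cases i <;> fin_cases j <;> simp [mU_coe, mH_coe, mW_coe, mul_comm]

theorem mH_comm {F : Type*} [Field F] (s t : F) (hs : s ≠ 0) (ht : t ≠ 0) :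
    mH s hs * mH t ht = mH t ht * mH s hs := by
  rw [mH_mul, mH_mul]; simp only [mul_comm]

theorem mW_mH {F : Type*} [Field F] (t : F) (ht : t ≠ 0) :
    mW F * mH t ht * (mW F)⁻¹ * mH t ht = 1 := by
  have : mW F * mH t ht * (mW F)⁻¹ = (mH t ht)⁻¹ := by
    rw [mul_inv_eq_iff_eq_mul, eq_inv_mul_iff_mul_eq]
    ext i j
    fin_cases i <;> fin_cases j <;>
      simp [mU_coe, mH_coe, mW_coe, ht]
  rw [this]; simp

theorem mW_rel {F : Type*} [Field F] (t : F) (ht : t ≠ 0) :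
    mU t * (mW F)⁻¹ * mU t⁻¹ * mW F * mU t = mH t ht * mW F := by
  have : (mW F)⁻¹ * mU t⁻¹ * mW F = mU (-t) * (mH t ht * mW F) * mU (-t) := by
    rw [mul_assoc, inv_mul_eq_iff_eq_mul]
    ext i j
    fin_cases i <;> fin_cases j <;>
      simp [mU_coe, mH_coe, mW_coe, ht]
  calc mU t * (mW F)⁻¹ * mU t⁻¹ * mW F * mU t
      = mU t * ((mW F)⁻¹ * mU t⁻¹ * mW F) * mU t := by group
    _ = (mU t * mU (-t)) * (mH t ht * mW F) * (mU (-t) * mU t) := by rw [this]; group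
    _ = _ := by rw [mU_mul, mU_mul]; simp [mU_zero]

theorem mH_mU_eq {F : Type*} [Field F] (t : F) (ht : t ≠ 0) (x : F) :
    mH t ht * mU x = mU (t ^ 2 * x) * mH t ht := by
  rw [← mH_mU t ht x]; group

theorem mNum {F : Type*} [Field F] (D : PData F) (l : List ℕ) :
    numW (mU 1) (mH D.e D.he) l = mU ((Nat.ofDigits D.B l : ℕ) : F) := by
  rw [numW_eq _ _ D.B, mU_pow]
  rw [mH_mU, mU_pow, mul_one, D.heB]

theorem mPol {F : Type*} [Field F] (D : PData F) (l : List (List ℕ)) :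
    polW (mU 1) (mH D.e D.he) (mH D.s D.hs) l =
      mU (Polynomial.aeval (D.s ^ 2) (toPoly D.B l)) := by
  induction l with
  | nil => simp [polW, toPoly, mU_zero]
  | cons l ls ih =>
    rw [polW, ih, mNum, mH_mU, mU_mul, toPoly]
    simp

theorem mPolc {F : Type*} [Field F] (D : PData F) (x : F) :
    polW (mU 1) (mH D.e D.he) (mH D.s D.hs) (D.c x) = mU x := by
  rw [mPol, D.hc]

theorem mwW {F : Type*} [Field F] (D : PData F) (x : F) (hx : x ≠ 0) :
    wW D (mU 1) (mW F) (mH D.s D.hs) (mH D.e D.he) x = mH x hx * mW F := by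
  rw [wW, mPolc, mPolc, mW_rel x hx]

theorem rels_SL {F : Type*} [Field F] (D : PData F) :
    ∀ g ∈ rels D (mU 1) (mW F) (mH D.s D.hs) (mH D.r D.hr) (mH D.e D.he) (mH D.z D.hz), g = 1 := by
  intro g hg
  simp only [rels, List.mem_cons, List.not_mem_nil, or_false] at hg
  rcases hg with h | h | h | h | h | h | h | h | h | h | h | h | h | h <;> rw [h]
  · rw [mH_comm]; group
  · rw [mH_comm]; group
  · rw [mH_mU, mU_mul, add_comm, ← mU_mul]; group
  · rw [mH_mU, mH_mU, mU_mul, D.hrs, mul_one, mul_one, mul_inv_cancel]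
  · rw [mH_mU, mU_pow, D.heB, mul_one, mul_inv_cancel]
  · rw [mNum, D.hlp, D.hp, mU_zero]
  · rw [mPol, D.hlf, mU_zero]
  · rw [mPolc, mH_mU, mul_one, mul_inv_cancel]
  · exact mW_mH _ _
  · have := mW_rel (1 : F) one_ne_zero
    rw [inv_one] at this
    rw [this]
    have h1 : mH (1 : F) one_ne_zero = 1 := by
      ext i j
      fin_cases i <;> fin_cases j <;> simp [mH]
    rw [h1]; group
  · rw [mwW D _ D.hs]; group
  · rw [mwW D _ D.hr]; group
  · rw [mwW D _ D.he]; group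
  · rw [mwW D _ D.hz]; group

/-! ## The core argument -/

theorem core_inj {F : Type*} [Field F] [Finite F] (D : PData F) {G : Type*} [Group G]
    (u w a b d h : G) (hrel : ∀ g ∈ rels D u w a b d h, g = 1)
    (htop : Subgroup.closure ({u, w, a, b, d, h} : Set G) = ⊤)
    (π : G →* Matrix.SpecialLinearGroup (Fin 2) F)
    (πu : π u = mU 1) (πw : π w = mW F) (πa : π a = mH D.s D.hs)
    (πd : π d = mH D.e D.he) (πh : π h = mH D.z D.hz) (g : G) (hg : π g = 1) : g = 1 := by
  simp only [rels, List.mem_cons, List.not_mem_nil, or_false, forall_eq_or_imp, forall_eq] at hrel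
  obtain ⟨r1, r2, r3, r4, r5, r6, r7, r8, r9, r10, r11, r12, r13, r14⟩ := hrel
  have hab : a * b = b * a := by
    rw [mul_inv_eq_one, mul_inv_eq_iff_eq_mul] at r1; exact r1
  have hha : h * a = a * h := by
    rw [mul_inv_eq_one, mul_inv_eq_iff_eq_mul] at r2; exact r2
  have hua : Commute u (a * u * a⁻¹) := by
    rw [mul_inv_eq_one, mul_inv_eq_iff_eq_mul] at r3; exact r3
  have hbu : b * u * b⁻¹ = u * (a * u * a⁻¹) := mul_inv_eq_one.1 r4
  have hdu : d * u * d⁻¹ = u ^ D.B := mul_inv_eq_one.1 r5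
  have hup : u ^ D.p = 1 := by rw [numW_eq u d D.B hdu, D.hlp] at r6; exact r6
  have hhu : h * u * h⁻¹ = polW u d a (D.c (D.z ^ 2)) := mul_inv_eq_one.1 r8
  have hwh : w * h * w⁻¹ = h⁻¹ := mul_eq_one_iff_eq_inv.1 r9
  have hw1 : u * w⁻¹ * u * w * u = w := mul_inv_eq_one.1 r10
  rw [mul_inv_eq_one] at r11 r12 r13 r14
  obtain ⟨ψ, ψ1, ψadd, ψact, ψpol⟩ := exists_psi u d a (baumslag u a b hab hua hbu) D.B D.p D.lf
    (D.s ^ 2) hdu hup r7 D.c D.hc D.hker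
  have ψ0 : ψ 0 = 1 := by
    have := ψadd 0 0
    rw [add_zero] at this
    exact (mul_eq_left.1 this.symm)
  have ψneg : ∀ x, ψ (-x) = (ψ x)⁻¹ := by
    intro x
    rw [eq_inv_iff_mul_eq_one, ← ψadd, neg_add_cancel, ψ0]
  have ψh : ∀ x, h * ψ x * h⁻¹ = ψ (D.z ^ 2 * x) :=
    ψact h (D.z ^ 2) hha (by rw [hhu, ψpol])
  have ψh' : ∀ x, h⁻¹ * ψ (D.z ^ 2 * x) * h = ψ x := by
    intro x; rw [← ψh]; group
  let W : F → G := fun x => ψ x * w⁻¹ * ψ x⁻¹ * w * ψ x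
  have hwW : ∀ x, wW D u w a d x = W x := by
    intro x; simp only [wW, ψpol, W]
  rw [hwW] at r11 r12 r13 r14
  have W1 : W 1 = w := by simp only [W, inv_one, ψ1]; exact hw1
  have hz2 : D.z ^ 2 ≠ 0 := pow_ne_zero 2 D.hz
  have hw' : w * h⁻¹ = h * w := by
    have e : w * h = h⁻¹ * w := mul_inv_eq_iff_eq_mul.1 hwh
    rw [mul_inv_eq_iff_eq_mul, mul_assoc, e]; group
  have hwinv : h * w⁻¹ = w⁻¹ * h⁻¹ := by
    rw [← hwh]; group
  have Wh : ∀ x, h * W x * h⁻¹ = W (D.z ^ 2 * x) := by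
    intro x
    have e1 : ψ x⁻¹ = h * ψ ((D.z ^ 2 * x)⁻¹) * h⁻¹ := by
      rw [ψh, mul_inv, mul_inv_cancel_left₀ hz2]
    have e2 : h * w⁻¹ * h = w⁻¹ := by rw [hwinv]; group
    have e3 : h⁻¹ * w * h⁻¹ = w := by rw [mul_assoc, hw']; group
    simp only [W]
    rw [e1]
    calc h * (ψ x * w⁻¹ * (h * ψ ((D.z ^ 2 * x)⁻¹) * h⁻¹) * w * ψ x) * h⁻¹
        = (h * ψ x * h⁻¹) * (h * w⁻¹ * h) * ψ ((D.z ^ 2 * x)⁻¹) * (h⁻¹ * w * h⁻¹) *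
          (h * ψ x * h⁻¹) := by group
      _ = _ := by rw [e2, e3, ψh]
  have Wpow : ∀ n : ℕ, W (D.z ^ n) = h ^ n * w ∧ W (D.z ^ (n + 1)) = h ^ (n + 1) * w := by
    intro n
    induction n with
    | zero => simp only [pow_zero, W1, one_mul, zero_add, pow_one, r14, and_self]
    | succ n ih =>
      refine ⟨ih.2, ?_⟩
      have e : D.z ^ (n + 1 + 1) = D.z ^ 2 * D.z ^ n := by ring
      rw [e, ← Wh, ih.1, ← mul_assoc h, mul_assoc, hw', ← pow_succ', ← mul_assoc, ← pow_succ]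
  have Wx : ∀ x, x ≠ 0 → ∃ n : ℕ, W x = h ^ n * w ∧ D.z ^ n = x := by
    intro x hx
    obtain ⟨n, hn⟩ := D.hgen x hx
    exact ⟨n, by rw [← hn]; exact (Wpow n).1, hn⟩
  have hpow1 : ∀ n : ℕ, D.z ^ n = 1 → h ^ n = 1 := by
    intro n hn
    have := (Wpow n).1
    rw [hn, W1] at this
    exact mul_eq_right.1 this.symm
  obtain ⟨N, hN⟩ : ∃ N : ℕ, h⁻¹ = h ^ N := by
    obtain ⟨N, hN⟩ := D.hgen D.z⁻¹ (inv_ne_zero D.hz)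
    refine ⟨N, ?_⟩
    have := hpow1 (N + 1) (by rw [pow_succ, hN, inv_mul_cancel₀ D.hz])
    rw [pow_succ] at this
    exact (eq_inv_of_mul_eq_one_left this).symm
  obtain ⟨M, hM⟩ : ∃ M : ℕ, w⁻¹ = h ^ M * w := by
    obtain ⟨n, hn, -⟩ := Wx (-1) (neg_ne_zero.2 one_ne_zero)
    refine ⟨n, ?_⟩
    rw [← hn]
    simp only [W]
    rw [inv_neg, inv_one, ψneg, ψ1]
    conv_lhs => rw [← hw1]
    group
  -- the normal form set
  let S : Set G := {g | (∃ x, ∃ i : ℕ, g = ψ x * h ^ i) ∨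
    (∃ x y, ∃ i : ℕ, g = ψ x * w * ψ y * h ^ i)}
  have Sψ : ∀ z g, g ∈ S → ψ z * g ∈ S := by
    rintro z g (⟨x, i, rfl⟩ | ⟨x, y, i, rfl⟩)
    · exact Or.inl ⟨z + x, i, by rw [ψadd]; group⟩
    · exact Or.inr ⟨z + x, y, i, by rw [ψadd]; group⟩
  have hψc : ∀ x, h * ψ x = ψ (D.z ^ 2 * x) * h := by
    intro x; rw [← ψh]; group
  have hψc' : ∀ x, h⁻¹ * ψ x = ψ ((D.z ^ 2)⁻¹ * x) * h⁻¹ := by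
    intro x
    have := ψh' ((D.z ^ 2)⁻¹ * x)
    rw [mul_inv_cancel_left₀ hz2] at this
    rw [← this]; group
  have Sh : ∀ g, g ∈ S → h * g ∈ S := by
    rintro g (⟨x, i, rfl⟩ | ⟨x, y, i, rfl⟩)
    · refine Or.inl ⟨D.z ^ 2 * x, i + 1, ?_⟩
      rw [← mul_assoc, hψc, pow_succ']; group
    · refine Or.inr ⟨D.z ^ 2 * x, (D.z ^ 2)⁻¹ * y, N + i, ?_⟩
      rw [pow_add, ← hN]
      calc h * (ψ x * w * ψ y * h ^ i) = (h * ψ x) * w * ψ y * h ^ i := by group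
        _ = ψ (D.z ^ 2 * x) * (h * w) * ψ y * h ^ i := by rw [hψc]; group
        _ = ψ (D.z ^ 2 * x) * w * (h⁻¹ * ψ y) * h ^ i := by rw [← hw']; group
        _ = _ := by rw [hψc']; group
  have Shn : ∀ (n : ℕ) g, g ∈ S → h ^ n * g ∈ S := by
    intro n
    induction n with
    | zero => intro g hg; simpa using hg
    | succ n ih => intro g hg; rw [pow_succ', mul_assoc]; exact Sh _ (ih g hg)
  have Shi : ∀ g, g ∈ S → h⁻¹ * g ∈ S := by
    intro g hg; rw [hN]; exact Shn _ _ hg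
  have Shni : ∀ (n : ℕ) g, g ∈ S → (h ^ n)⁻¹ * g ∈ S := by
    intro n g hg
    rw [← inv_pow, hN, ← pow_mul]; exact Shn _ _ hg
  have hww : w * w = (h ^ M)⁻¹ := by
    have e : h ^ M * (w * w) = 1 := by rw [← mul_assoc, ← hM, inv_mul_cancel]
    exact eq_inv_of_mul_eq_one_right e
  have Sw : ∀ g, g ∈ S → w * g ∈ S := by
    rintro g (⟨x, i, rfl⟩ | ⟨x, y, i, rfl⟩)
    · exact Or.inr ⟨0, x, i, by rw [ψ0]; group⟩
    · by_cases hx : x = 0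
      · rw [hx, ψ0]
        have : w * (1 * w * ψ y * h ^ i) = (w * w) * (ψ y * h ^ i) := by group
        rw [this, hww]
        exact Shni _ _ (Or.inl ⟨y, i, rfl⟩)
      · obtain ⟨n, hn, -⟩ := Wx x⁻¹ (inv_ne_zero hx)
        have e : w⁻¹ * ψ x * w = ψ (-x⁻¹) * (h ^ n * w) * ψ (-x⁻¹) := by
          rw [← hn, ψneg]; simp only [W, inv_inv]; group
        have : w * (ψ x * w * ψ y * h ^ i) =
            (w * w) * (ψ (-x⁻¹) * (h ^ n * (1 * (w * (ψ (-x⁻¹ + y) * h ^ i))))) := by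
          rw [ψadd]
          calc w * (ψ x * w * ψ y * h ^ i) = (w * w) * (w⁻¹ * ψ x * w) * ψ y * h ^ i := by group
            _ = _ := by rw [e]; group
        rw [this, hww]
        refine Shni _ _ (Sψ _ _ (Shn _ _ ?_))
        exact Or.inr ⟨0, -x⁻¹ + y, i, by rw [ψ0]; group⟩
  have Swi : ∀ g, g ∈ S → w⁻¹ * g ∈ S := by
    intro g hg
    rw [hM, mul_assoc]
    exact Shn _ _ (Sw _ hg)
  have hT : ∀ t x, x ≠ 0 → W x = t * w → ∃ n : ℕ, t = h ^ n := by
    intro t x hx ht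
    obtain ⟨n, hn, -⟩ := Wx x hx
    exact ⟨n, mul_right_cancel (ht.symm.trans hn)⟩
  obtain ⟨na, hna⟩ := hT a D.s D.hs r11
  obtain ⟨nb, hnb⟩ := hT b D.r D.hr r12
  obtain ⟨nd, hnd⟩ := hT d D.e D.he r13
  have S1 : (1 : G) ∈ S := Or.inl ⟨0, 0, by simp [ψ0]⟩
  have hall : ∀ g : G, g ∈ S := by
    intro g
    have hgt : g ∈ Subgroup.closure ({u, w, a, b, d, h} : Set G) := by rw [htop]; trivial
    induction hgt using Subgroup.closure_induction_left with
    | one => exact S1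
    | mul_left x hx y hy ih =>
      simp only [Set.mem_insert_iff, Set.mem_singleton_iff] at hx
      rcases hx with rfl | rfl | rfl | rfl | rfl | rfl
      · rw [← ψ1]; exact Sψ _ _ ih
      · exact Sw _ ih
      · rw [hna]; exact Shn _ _ ih
      · rw [hnb]; exact Shn _ _ ih
      · rw [hnd]; exact Shn _ _ ih
      · exact Sh _ ih
    | inv_mul_cancel x hx y hy ih =>
      simp only [Set.mem_insert_iff, Set.mem_singleton_iff] at hx
      rcases hx with rfl | rfl | rfl | rfl | rfl | rfl
      · rw [← ψ1, ← ψneg]; exact Sψ _ _ ih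
      · exact Swi _ ih
      · rw [hna]; exact Shni _ _ ih
      · rw [hnb]; exact Shni _ _ ih
      · rw [hnd]; exact Shni _ _ ih
      · exact Shi _ ih
  have πψ : ∀ x, π (ψ x) = mU x := by
    intro x
    rw [← ψpol, map_polW, πu, πd, πa, mPolc]
  have πhn : ∀ n : ℕ, π (h ^ n) = mH (D.z ^ n) (pow_ne_zero n D.hz) := by
    intro n
    induction n with
    | zero =>
      rw [pow_zero, map_one]
      ext i j
      fin_cases i <;> fin_cases j <;> simp [mH_coe]
    | succ n ih =>
      rw [pow_succ, map_mul, ih, πh, mH_mul]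
      simp only [pow_succ]
  rcases hall g with ⟨x, i, rfl⟩ | ⟨x, y, i, rfl⟩
  · rw [map_mul, πψ, πhn] at hg
    have h00 := congrArg (fun A : Matrix.SpecialLinearGroup (Fin 2) F => A 0 0) hg
    have h01 := congrArg (fun A : Matrix.SpecialLinearGroup (Fin 2) F => A 0 1) hg
    simp [mU_coe, mH_coe] at h00 h01
    have hx : x = 0 := by
      rcases h01 with h | h
      · exact h
      · exact absurd h.1 D.hz
    rw [hx, ψ0, hpow1 i h00, one_mul]
  · exfalso
    rw [map_mul, map_mul, map_mul, πψ, πψ, πhn, πw] at hg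
    have h10 := congrArg (fun A : Matrix.SpecialLinearGroup (Fin 2) F => A 1 0) hg
    simp [mU_coe, mH_coe, mW_coe] at h10
    exact D.hz h10.1

/-! ## Generation of `SL(2, F)` -/

theorem numW_mem {G : Type*} [Group G] (K : Subgroup G) (u d : G) (hu : u ∈ K) (hd : d ∈ K)
    (l : List ℕ) : numW u d l ∈ K := by
  induction l with
  | nil => exact K.one_mem
  | cons c cs ih =>
    exact K.mul_mem (K.pow_mem hu c) (K.mul_mem (K.mul_mem hd ih) (K.inv_mem hd))

theorem polW_mem {G : Type*} [Group G] (K : Subgroup G) (u d a : G) (hu : u ∈ K) (hd : d ∈ K)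
    (ha : a ∈ K) (l : List (List ℕ)) : polW u d a l ∈ K := by
  induction l with
  | nil => exact K.one_mem
  | cons c cs ih =>
    exact K.mul_mem (numW_mem K u d hu hd c) (K.mul_mem (K.mul_mem ha ih) (K.inv_mem ha))

theorem SL_gen {F : Type*} [Field F] (D : PData F)
    (K : Subgroup (Matrix.SpecialLinearGroup (Fin 2) F))
    (hu : mU 1 ∈ K) (hw : mW F ∈ K) (ha : mH D.s D.hs ∈ K) (hd : mH D.e D.he ∈ K)
    (hh : mH D.z D.hz ∈ K) (A : Matrix.SpecialLinearGroup (Fin 2) F) : A ∈ K := by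
  have hU : ∀ x, mU x ∈ K := by
    intro x
    rw [← mPolc D x]
    exact polW_mem K _ _ _ hu hd ha _
  have hH : ∀ x (hx : x ≠ 0), mH x hx ∈ K := by
    intro x hx
    obtain ⟨n, rfl⟩ := D.hgen x hx
    clear hu hd ha hw hU
    induction n with
    | zero =>
      convert K.one_mem
      ext i j
      fin_cases i <;> fin_cases j <;> simp [mH_coe]
    | succ n ih =>
      have e : mH (D.z ^ (n + 1)) hx = mH (D.z ^ n) (pow_ne_zero n D.hz) * mH D.z D.hz := by
        rw [mH_mul]; simp only [pow_succ]
      rw [e]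
      exact K.mul_mem (ih _) hh
  have hdet := A.det_coe
  rw [Matrix.det_fin_two] at hdet
  by_cases hc : A 1 0 = 0
  · have ha0 : A 0 0 ≠ 0 := by
      intro h; rw [h, hc] at hdet; simp at hdet
    have e : A = mU (A 0 0 * A 0 1) * mH (A 0 0) ha0 := by
      rw [hc] at hdet
      ext i j
      fin_cases i <;> fin_cases j <;> simp [mU_coe, mH_coe, hc]
      · field_simp
      · field_simp; linear_combination hdet
    rw [e]
    exact K.mul_mem (hU _) (hH _ _)
  · have e : A = mU (A 0 0 / A 1 0) * mW F * mU (A 1 1 * A 1 0) *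
        mH (-A 1 0) (neg_ne_zero.2 hc) := by
      ext i j
      fin_cases i <;> fin_cases j <;> simp [mU_coe, mH_coe, mW_coe]
      · field_simp
      · field_simp; linear_combination -hdet
      · field_simp
    rw [e]
    exact K.mul_mem (K.mul_mem (K.mul_mem (hU _) hw) (hU _)) (hH _ _)

/-! ## Lengths -/

/-- Length bound for `numW`. -/
def costN (l : List ℕ) : ℕ := (l.map (· + 2)).sum

/-- Length bound for `polW`. -/
def costP (l : List (List ℕ)) : ℕ := (l.map (costN · + 2)).sum

theorem fg_norm_pow_le {α : Type*} [DecidableEq α] (u : FreeGroup α) (hu : u.norm ≤ 1) (n : ℕ) :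
    (u ^ n).norm ≤ n := by
  induction n with
  | zero => simp
  | succ n ih =>
    rw [pow_succ]
    exact (FreeGroup.norm_mul_le _ _).trans (by omega)

theorem norm_conj_le {α : Type*} [DecidableEq α] (d x : FreeGroup α) (hd : d.norm ≤ 1) :
    (d * x * d⁻¹).norm ≤ x.norm + 2 := by
  have h1 := FreeGroup.norm_mul_le (d * x) d⁻¹
  have h2 := FreeGroup.norm_mul_le d x
  rw [FreeGroup.norm_inv_eq] at h1
  omega

theorem norm_numW {α : Type*} [DecidableEq α] (u d : FreeGroup α) (hu : u.norm ≤ 1)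
    (hd : d.norm ≤ 1) (l : List ℕ) : (numW u d l).norm ≤ costN l := by
  induction l with
  | nil => simp [numW, costN]
  | cons c cs ih =>
    have h1 := FreeGroup.norm_mul_le (u ^ c) (d * numW u d cs * d⁻¹)
    have h2 := fg_norm_pow_le u hu c
    have h3 := norm_conj_le d (numW u d cs) hd
    simp only [numW, costN, List.map_cons, List.sum_cons] at *
    omega

theorem norm_polW {α : Type*} [DecidableEq α] (u d a : FreeGroup α) (hu : u.norm ≤ 1)
    (hd : d.norm ≤ 1) (ha : a.norm ≤ 1) (l : List (List ℕ)) :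
    (polW u d a l).norm ≤ costP l := by
  induction l with
  | nil => simp [polW, costP]
  | cons c cs ih =>
    have h1 := FreeGroup.norm_mul_le (numW u d c) (a * polW u d a cs * a⁻¹)
    have h2 := norm_numW u d hu hd c
    have h3 := norm_conj_le a (polW u d a cs) ha
    simp only [polW, costP, List.map_cons, List.sum_cons] at *
    omega

/-- The data `D` only involves words of length at most `K`. -/
structure PBound {F : Type*} [Field F] (D : PData F) (K : ℕ) : Prop where
  hB : D.B ≤ 4
  hlp : costN D.lp ≤ K
  hlf : costP D.lf ≤ K
  hc : ∀ x, costP (D.c x) ≤ K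

theorem norm_mul_le_of {α : Type*} [DecidableEq α] {x y : FreeGroup α} {m n : ℕ}
    (hx : x.norm ≤ m) (hy : y.norm ≤ n) : (x * y).norm ≤ m + n :=
  (FreeGroup.norm_mul_le x y).trans (Nat.add_le_add hx hy)

theorem norm_inv_le_of {α : Type*} [DecidableEq α] {x : FreeGroup α} {m : ℕ}
    (hx : x.norm ≤ m) : (x⁻¹).norm ≤ m := by
  rwa [FreeGroup.norm_inv_eq]

theorem norm_wW {F : Type*} [Field F] (D : PData F) (K : ℕ) (hK : PBound D K)
    {α : Type*} [DecidableEq α] (u w a d : FreeGroup α) (hu : u.norm ≤ 1) (hw : w.norm ≤ 1)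
    (ha : a.norm ≤ 1) (hd : d.norm ≤ 1) (x : F) : (wW D u w a d x).norm ≤ K + 1 + K + 1 + K := by
  have hP : ∀ x, (polW u d a (D.c x)).norm ≤ K := fun x =>
    (norm_polW u d a hu hd ha _).trans (hK.hc x)
  exact norm_mul_le_of (norm_mul_le_of (norm_mul_le_of (norm_mul_le_of (hP _)
    (norm_inv_le_of hw)) (hP _)) hw) (hP _)

theorem norm_rels {F : Type*} [Field F] (D : PData F) (K : ℕ) (hK : PBound D K)
    {α : Type*} [DecidableEq α] (u w a b d h : FreeGroup α) (hu : u.norm ≤ 1) (hw : w.norm ≤ 1)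
    (ha : a.norm ≤ 1) (hb : b.norm ≤ 1) (hd : d.norm ≤ 1) (hh : h.norm ≤ 1) :
    ∀ g ∈ rels D u w a b d h, g.norm ≤ 3 * K + 10 := by
  have hP : ∀ x, (polW u d a (D.c x)).norm ≤ K := fun x =>
    (norm_polW u d a hu hd ha _).trans (hK.hc x)
  have hau : (a * u * a⁻¹).norm ≤ 1 + 1 + 1 :=
    norm_mul_le_of (norm_mul_le_of ha hu) (norm_inv_le_of ha)
  have hW := norm_wW D K hK u w a d hu hw ha hd
  have hB := hK.hB
  have comm3 : ∀ x y z : FreeGroup α, x.norm ≤ 1 → y.norm ≤ 1 → z.norm ≤ 1 →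
      (x * y * z⁻¹).norm ≤ 1 + 1 + 1 := fun x y z hx hy hz =>
    norm_mul_le_of (norm_mul_le_of hx hy) (norm_inv_le_of hz)
  intro g hg
  simp only [rels, List.mem_cons, List.not_mem_nil, or_false] at hg
  rcases hg with h | h | h | h | h | h | h | h | h | h | h | h | h | h <;> rw [h]
  · exact (norm_mul_le_of (comm3 a b a ha hb ha) (norm_inv_le_of hb)).trans (by omega)
  · exact (norm_mul_le_of (comm3 _ a _ hh ha hh) (norm_inv_le_of ha)).trans (by omega)
  · exact (norm_mul_le_of (norm_mul_le_of (norm_mul_le_of hu hau) (norm_inv_le_of hu))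
      (norm_inv_le_of hau)).trans (by omega)
  · exact (norm_mul_le_of (comm3 b u b hb hu hb)
      (norm_inv_le_of (norm_mul_le_of hu hau))).trans (by omega)
  · exact (norm_mul_le_of (comm3 d u d hd hu hd)
      (norm_inv_le_of (fg_norm_pow_le u hu D.B))).trans (by omega)
  · exact (norm_numW u d hu hd _).trans (hK.hlp.trans (by omega))
  · exact (norm_polW u d a hu hd ha _).trans (hK.hlf.trans (by omega))
  · exact (norm_mul_le_of (comm3 _ u _ hh hu hh) (norm_inv_le_of (hP _))).trans (by omega)
  · exact (norm_mul_le_of (comm3 w _ w hw hh hw) hh).trans (by omega)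
  · exact (norm_mul_le_of (norm_mul_le_of (norm_mul_le_of (norm_mul_le_of (norm_mul_le_of hu
      (norm_inv_le_of hw)) hu) hw) hu) (norm_inv_le_of hw)).trans (by omega)
  · exact (norm_mul_le_of (hW _) (norm_inv_le_of (norm_mul_le_of ha hw))).trans (by omega)
  · exact (norm_mul_le_of (hW _) (norm_inv_le_of (norm_mul_le_of hb hw))).trans (by omega)
  · exact (norm_mul_le_of (hW _) (norm_inv_le_of (norm_mul_le_of hd hw))).trans (by omega)
  · exact (norm_mul_le_of (hW _) (norm_inv_le_of (norm_mul_le_of hh hw))).trans (by omega)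

/-! ## Assembling presentations -/

theorem hbp_of {G : Type} [Group G] {m : ℕ} (x : Fin m → G) (R : List (FreeGroup (Fin m)))
    (hsurj : Function.Surjective (FreeGroup.lift x)) (hrel : ∀ r ∈ R, FreeGroup.lift x r = 1)
    (hker : ∀ y, FreeGroup.lift x y = 1 → y ∈ Subgroup.normalClosure {r | r ∈ R})
    (M : ℕ) (hM : ∀ r ∈ R, r.norm ≤ M) (g k : ℕ) (L : ℝ) (hg : m ≤ g) (hk : R.length ≤ k)
    (hL : ((m + R.length * M : ℕ) : ℝ) ≤ L) : HasBoundedPresentation G g k L := by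
  refine ⟨m, FreeGroup.lift x, R.toFinset, hg, hsurj, (List.toFinset_card_le R).trans hk, ?_, ?_⟩
  · have e : ((R.toFinset : Finset (FreeGroup (Fin m))) : Set (FreeGroup (Fin m))) =
        {r | r ∈ R} := by ext; simp
    rw [e]
    apply le_antisymm
    · intro y hy
      exact hker y hy
    · apply Subgroup.normalClosure_le_normal
      intro r hr
      exact hrel r hr
  · refine le_trans ?_ hL
    have h1 : ∑ w ∈ R.toFinset, FreeGroup.norm w ≤ R.toFinset.card • M :=
      Finset.sum_le_card_nsmul _ _ _ (by intro r hr; exact hM r (List.mem_toFinset.1 hr))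
    have h2 : R.toFinset.card • M ≤ R.length * M := by
      rw [smul_eq_mul]; exact Nat.mul_le_mul_right _ (List.toFinset_card_le R)
    exact_mod_cast Nat.add_le_add_left (h1.trans h2) m

/-- Images of the six generators in `SL(2, F)`. -/
def gens6 {F : Type} [Field F] (D : PData F) : Fin 6 → Matrix.SpecialLinearGroup (Fin 2) F :=
  ![mU 1, mW F, mH D.s D.hs, mH D.r D.hr, mH D.e D.he, mH D.z D.hz]

/-- The relators on the first six generators. -/
def relsFree {F : Type} [Field F] (D : PData F) : List (FreeGroup (Fin 6)) :=
  rels D (.of 0) (.of 1) (.of 2) (.of 3) (.of 4) (.of 5)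

theorem lift6_surj {F : Type} [Field F] (D : PData F) :
    Function.Surjective (FreeGroup.lift (gens6 D)) := by
  intro A
  have h : ∀ i, gens6 D i ∈ (FreeGroup.lift (gens6 D)).range := fun i => ⟨.of i, by simp⟩
  exact SL_gen D (FreeGroup.lift (gens6 D)).range (h 0) (h 1) (h 2) (h 4) (h 5) A

theorem lift6_rel {F : Type} [Field F] (D : PData F) :
    ∀ r ∈ relsFree D, FreeGroup.lift (gens6 D) r = 1 := by
  intro r hr
  have h1 : FreeGroup.lift (gens6 D) r ∈ (relsFree D).map (FreeGroup.lift (gens6 D)) :=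
    List.mem_map_of_mem hr
  rw [relsFree, map_rels] at h1
  simp only [FreeGroup.lift_apply_of] at h1
  exact rels_SL D _ h1

theorem lift6_ker {F : Type} [Field F] [Finite F] (D : PData F) (y : FreeGroup (Fin 6))
    (hy : FreeGroup.lift (gens6 D) y = 1) : y ∈ Subgroup.normalClosure {r | r ∈ relsFree D} := by
  set N := Subgroup.normalClosure {r | r ∈ relsFree D} with hN
  have hle : N ≤ (FreeGroup.lift (gens6 D)).ker :=
    Subgroup.normalClosure_le_normal (fun r hr => lift6_rel D r hr)
  let q := QuotientGroup.mk' N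
  let π := QuotientGroup.lift N (FreeGroup.lift (gens6 D)) hle
  have hπ : ∀ i, π (q (.of i)) = gens6 D i := by
    intro i
    show FreeGroup.lift (gens6 D) (.of i) = _
    simp
  have key := core_inj D (q (.of 0)) (q (.of 1)) (q (.of 2)) (q (.of 3)) (q (.of 4)) (q (.of 5))
    (by
      intro g hg
      rw [← map_rels] at hg
      obtain ⟨r, hr, rfl⟩ := List.mem_map.1 hg
      exact (QuotientGroup.eq_one_iff r).2 (Subgroup.subset_normalClosure hr))
    (by
      rw [eq_top_iff, ← MonoidHom.range_eq_top.2 (QuotientGroup.mk'_surjective N),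
        MonoidHom.range_eq_map, ← FreeGroup.closure_range_of, MonoidHom.map_closure]
      apply Subgroup.closure_mono
      rintro _ ⟨_, ⟨i, rfl⟩, rfl⟩
      fin_cases i <;> simp [q])
    π (hπ 0) (hπ 1) (hπ 2) (hπ 4) (hπ 5) (q y) hy
  exact (QuotientGroup.eq_one_iff y).1 key

theorem norm_relsFree {F : Type} [Field F] (D : PData F) (K : ℕ) (hK : PBound D K) :
    ∀ r ∈ relsFree D, r.norm ≤ 3 * K + 10 := by
  apply norm_rels D K hK <;> simp

theorem SL_hbp {F : Type} [Field F] [Finite F] (D : PData F) (K : ℕ) (hK : PBound D K)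
    (C : ℕ) (L : ℝ) (hC : 22 ≤ C) (hL : ((7 + 22 * (3 * K + 10) : ℕ) : ℝ) ≤ L) :
    HasBoundedPresentation (Matrix.SpecialLinearGroup (Fin 2) F) C C L := by
  refine hbp_of (gens6 D) (relsFree D) (lift6_surj D) (lift6_rel D) (lift6_ker D) (3 * K + 10)
    (norm_relsFree D K hK) C C L (by omega) (by simp [relsFree, rels]; omega)
    (le_trans ?_ hL)
  have : (relsFree D).length = 14 := by simp [relsFree, rels]
  rw [this]
  exact_mod_cast (by omega : 6 + 14 * (3 * K + 10) ≤ 7 + 22 * (3 * K + 10))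

theorem quot_hbp {F : Type} [Field F] [Finite F] (D : PData F) (K : ℕ) (hK : PBound D K)
    (C : ℕ) (L : ℝ) (hC : 22 ≤ C) (hL : ((7 + 22 * (3 * K + 10) : ℕ) : ℝ) ≤ L)
    {Q : Type} [Group Q] (f : Matrix.SpecialLinearGroup (Fin 2) F →* Q)
    (hf : Function.Surjective f) (hfk : ∀ x, f x = 1 ↔ (x = 1 ∨ x = mW F * mW F)) :
    HasBoundedPresentation Q C C L := by
  have hl : ∀ y, FreeGroup.lift (f ∘ gens6 D) y = f (FreeGroup.lift (gens6 D) y) := by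
    intro y
    have : FreeGroup.lift (f ∘ gens6 D) = f.comp (FreeGroup.lift (gens6 D)) := by
      ext i; simp
    rw [this]; rfl
  have hw2 : FreeGroup.lift (gens6 D) (.of 1 * .of 1) = mW F * mW F := by
    simp [gens6]
  refine hbp_of (f ∘ gens6 D) ((.of 1 * .of 1) :: relsFree D) ?_ ?_ ?_ (3 * K + 10)
    ?_ C C L (by omega) (by simp [relsFree, rels]; omega) (le_trans ?_ hL)
  · intro q
    obtain ⟨A, rfl⟩ := hf q
    obtain ⟨y, rfl⟩ := lift6_surj D A
    exact ⟨y, hl y⟩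
  · intro r hr
    rw [hl]
    rcases List.mem_cons.1 hr with rfl | hr
    · rw [hw2, hfk]; exact Or.inr rfl
    · rw [lift6_rel D r hr, map_one]
  · intro y hy
    have hmono : Subgroup.normalClosure {r | r ∈ relsFree D} ≤
        Subgroup.normalClosure {r | r ∈ ((.of 1 * .of 1) :: relsFree D : List _)} :=
      Subgroup.normalClosure_mono (fun r hr => List.mem_cons_of_mem _ hr)
    rw [hl, hfk] at hy
    rcases hy with hy | hy
    · exact hmono (lift6_ker D y hy)
    · have h1 : y * (.of 1 * .of 1)⁻¹ ∈ Subgroup.normalClosure {r | r ∈ relsFree D} := by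
        apply lift6_ker
        rw [map_mul, map_inv, hw2, hy, mul_inv_cancel]
      have h2 : (.of 1 * .of 1 : FreeGroup (Fin 6)) ∈
          Subgroup.normalClosure {r | r ∈ ((.of 1 * .of 1) :: relsFree D : List _)} :=
        Subgroup.subset_normalClosure (List.mem_cons_self)
      have := Subgroup.mul_mem _ (hmono h1) h2
      rwa [inv_mul_cancel_right] at this
  · intro r hr
    rcases List.mem_cons.1 hr with rfl | hr
    · exact (norm_mul_le_of (m := 1) (n := 1) (by simp) (by simp)).trans (by omega)
    · exact norm_relsFree D K hK r hr
  · have : ((.of 1 * .of 1) :: relsFree D : List _).length = 15 := by simp [relsFree, rels]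
    rw [this]
    exact_mod_cast (by omega : 6 + 15 * (3 * K + 10) ≤ 7 + 22 * (3 * K + 10))

/-- The extra relators for the extension of degree two. -/
def rels7 {F : Type*} [Field F] (D : PData F) {G : Type*} [Group G] (u w a b d h g : G) : List G :=
  [w * w,
   g * u * g⁻¹ * (polW u d a (D.c D.z))⁻¹,
   g * w * g⁻¹ * (h * w)⁻¹,
   g * a * g⁻¹ * a⁻¹,
   g * b * g⁻¹ * b⁻¹,
   g * d * g⁻¹ * d⁻¹,
   g * h * g⁻¹ * h⁻¹,
   g * g * h⁻¹]

theorem map_rels7 {F : Type*} [Field F] (D : PData F) {G H : Type*} [Group G] [Group H]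
    (f : G →* H) (u w a b d h g : G) :
    (rels7 D u w a b d h g).map f = rels7 D (f u) (f w) (f a) (f b) (f d) (f h) (f g) := by
  simp [rels7, map_polW]

theorem norm_rels7 {F : Type*} [Field F] (D : PData F) (K : ℕ) (hK : PBound D K)
    {α : Type*} [DecidableEq α] (u w a b d h g : FreeGroup α) (hu : u.norm ≤ 1) (hw : w.norm ≤ 1)
    (ha : a.norm ≤ 1) (hb : b.norm ≤ 1) (hd : d.norm ≤ 1) (hh : h.norm ≤ 1) (hg : g.norm ≤ 1) :
    ∀ r ∈ rels7 D u w a b d h g, r.norm ≤ 3 * K + 10 := by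
  have hP : ∀ x, (polW u d a (D.c x)).norm ≤ K := fun x =>
    (norm_polW u d a hu hd ha _).trans (hK.hc x)
  have comm3 : ∀ x y z : FreeGroup α, x.norm ≤ 1 → y.norm ≤ 1 → z.norm ≤ 1 →
      (x * y * z⁻¹).norm ≤ 1 + 1 + 1 := fun x y z hx hy hz =>
    norm_mul_le_of (norm_mul_le_of hx hy) (norm_inv_le_of hz)
  intro r hr
  simp only [rels7, List.mem_cons, List.not_mem_nil, or_false] at hr
  rcases hr with h | h | h | h | h | h | h | h <;> rw [h]
  · exact (norm_mul_le_of hw hw).trans (by omega)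
  · exact (norm_mul_le_of (comm3 g u g hg hu hg) (norm_inv_le_of (hP _))).trans (by omega)
  · exact (norm_mul_le_of (comm3 g w g hg hw hg)
      (norm_inv_le_of (norm_mul_le_of hh hw))).trans (by omega)
  · exact (norm_mul_le_of (comm3 g _ g hg ha hg) (norm_inv_le_of ha)).trans (by omega)
  · exact (norm_mul_le_of (comm3 g _ g hg hb hg) (norm_inv_le_of hb)).trans (by omega)
  · exact (norm_mul_le_of (comm3 g _ g hg hd hg) (norm_inv_le_of hd)).trans (by omega)
  · exact (norm_mul_le_of (comm3 g _ g hg hh hg) (norm_inv_le_of hh)).trans (by omega)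
  · exact (comm3 g g _ hg hg hh).trans (by omega)

theorem ext_hbp {F : Type} [Field F] [Finite F] (D : PData F) (K : ℕ) (hK : PBound D K)
    (C : ℕ) (L : ℝ) (hC : 22 ≤ C) (hL : ((7 + 22 * (3 * K + 10) : ℕ) : ℝ) ≤ L)
    {Q : Type} [Group Q] (f : Matrix.SpecialLinearGroup (Fin 2) F →* Q) (δ : Q)
    (hfk : ∀ x, f x = 1 ↔ (x = 1 ∨ x = mW F * mW F))
    (hδ : ∀ x, f x ≠ δ) (hcov : ∀ k, (∃ x, f x = k) ∨ ∃ x, f x * δ = k)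
    (hδu : δ * f (mU 1) = f (mU D.z) * δ) (hδw : δ * f (mW F) = f (mH D.z D.hz * mW F) * δ)
    (hδh : ∀ x hx, δ * f (mH x hx) = f (mH x hx) * δ)
    (hδ2 : δ * δ = f (mH D.z D.hz)) :
    HasBoundedPresentation Q C C L := by
  let x7 : Fin 7 → Q := ![f (mU 1), f (mW F), f (mH D.s D.hs), f (mH D.r D.hr), f (mH D.e D.he),
    f (mH D.z D.hz), δ]
  let ι : FreeGroup (Fin 6) →* FreeGroup (Fin 7) := FreeGroup.lift (fun i => .of i.castSucc)
  let R6 : List (FreeGroup (Fin 7)) := rels D (.of 0) (.of 1) (.of 2) (.of 3) (.of 4) (.of 5)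
  let R7 : List (FreeGroup (Fin 7)) :=
    rels7 D (.of 0) (.of 1) (.of 2) (.of 3) (.of 4) (.of 5) (.of 6)
  have hι : ∀ i, ι (.of i) = .of i.castSucc := by intro i; simp [ι]
  have hιR : (relsFree D).map ι = R6 := by
    rw [relsFree, map_rels]
    simp only [hι]
    rfl
  have hx7 : ∀ i, FreeGroup.lift x7 (.of i) = x7 i := by intro i; simp
  have hl : ∀ y, FreeGroup.lift x7 (ι y) = f (FreeGroup.lift (gens6 D) y) := by
    intro y
    have : (FreeGroup.lift x7).comp ι = f.comp (FreeGroup.lift (gens6 D)) := by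
      ext i
      simp only [MonoidHom.comp_apply, hι, hx7, FreeGroup.lift_apply_of]
      fin_cases i <;> rfl
    exact DFunLike.congr_fun this y
  have hR6 : ∀ r ∈ R6, FreeGroup.lift x7 r = 1 := by
    intro r hr
    rw [← hιR] at hr
    obtain ⟨r', hr', rfl⟩ := List.mem_map.1 hr
    rw [hl, lift6_rel D r' hr', map_one]
  have hR7 : ∀ r ∈ R7, FreeGroup.lift x7 r = 1 := by
    intro r hr
    have h1 : FreeGroup.lift x7 r ∈ R7.map (FreeGroup.lift x7) := List.mem_map_of_mem hr
    rw [map_rels7] at h1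
    simp only [hx7] at h1
    change _ ∈ rels7 D (f (mU 1)) (f (mW F)) (f (mH D.s D.hs)) (f (mH D.r D.hr)) (f (mH D.e D.he))
      (f (mH D.z D.hz)) δ at h1
    simp only [rels7, List.mem_cons, List.not_mem_nil, or_false] at h1
    rcases h1 with h | h | h | h | h | h | h | h <;> rw [h]
    · rw [← map_mul, hfk]; exact Or.inr rfl
    · rw [← map_polW, mPolc, hδu]; group
    · rw [hδw, ← map_mul]; group
    · rw [hδh]; group
    · rw [hδh]; group
    · rw [hδh]; group
    · rw [hδh]; group
    · rw [hδ2]; group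
  have hlen : (R6 ++ R7).length = 22 := by simp [R6, R7, rels, rels7]
  refine hbp_of x7 (R6 ++ R7) ?_ ?_ ?_ (3 * K + 10) ?_ C C L (by omega) (by omega)
    (le_trans ?_ hL)
  · intro k
    rcases hcov k with ⟨x, rfl⟩ | ⟨x, rfl⟩
    · obtain ⟨y, rfl⟩ := lift6_surj D x
      exact ⟨ι y, hl y⟩
    · obtain ⟨y, rfl⟩ := lift6_surj D x
      exact ⟨ι y * .of 6, by rw [map_mul, hl, hx7]; rfl⟩
  · intro r hr
    rcases List.mem_append.1 hr with hr | hr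
    · exact hR6 r hr
    · exact hR7 r hr
  · intro y hy
    set N := Subgroup.normalClosure {r | r ∈ R6 ++ R7} with hN
    let q := QuotientGroup.mk' N
    have hq : ∀ z, z ∈ N ↔ q z = 1 := fun z => (QuotientGroup.eq_one_iff z).symm
    have hqR : ∀ r, r ∈ R6 ++ R7 → q r = 1 := fun r hr =>
      (hq r).1 (Subgroup.subset_normalClosure hr)
    -- relations in the quotient
    have hrel7 : ∀ r ∈ rels7 D (q (.of 0)) (q (.of 1)) (q (.of 2)) (q (.of 3)) (q (.of 4))
        (q (.of 5)) (q (.of 6)), r = 1 := by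
      intro r hr
      rw [← map_rels7] at hr
      obtain ⟨r', hr', rfl⟩ := List.mem_map.1 hr
      exact hqR r' (List.mem_append_right _ hr')
    simp only [rels7, List.mem_cons, List.not_mem_nil, or_false, forall_eq_or_imp, forall_eq]
      at hrel7
    obtain ⟨s1, s2, s3, s4, s5, s6, s7, s8⟩ := hrel7
    let φ := q.comp ι
    have hφi : ∀ i, φ (.of i) = q (.of i.castSucc) := by
      intro i; show q (ι (.of i)) = _; rw [hι]
    have hφker : ∀ z, FreeGroup.lift (gens6 D) z = 1 → φ z = 1 := by
      intro z hz
      have h1 := lift6_ker D z hz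
      have h2 : Subgroup.normalClosure {r | r ∈ relsFree D} ≤ φ.ker := by
        apply Subgroup.normalClosure_le_normal
        intro r hr
        apply hqR
        apply List.mem_append_left
        rw [← hιR]
        exact List.mem_map_of_mem hr
      exact h2 h1
    have hφm : ∀ i, q (.of (Fin.castSucc i)) ∈ φ.range := fun i => ⟨.of i, hφi i⟩
    set γ := q (.of 6) with hγ
    rw [mul_inv_eq_one] at s2 s3 s4 s5 s6 s7 s8
    have hconj : ∀ z, γ * φ z * γ⁻¹ ∈ φ.range := by
      have : (⊤ : Subgroup (FreeGroup (Fin 6))) ≤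
          φ.range.comap ((MulAut.conj γ).toMonoidHom.comp φ) := by
        rw [← FreeGroup.closure_range_of, Subgroup.closure_le]
        rintro _ ⟨i, rfl⟩
        show γ * φ (.of i) * γ⁻¹ ∈ φ.range
        rw [hφi]
        fin_cases i
        · change γ * q (.of 0) * γ⁻¹ ∈ _
          rw [s2]
          exact polW_mem _ _ _ _ (hφm 0) (hφm 4) (hφm 2) _
        · change γ * q (.of 1) * γ⁻¹ ∈ _
          rw [s3]
          exact Subgroup.mul_mem _ (hφm 5) (hφm 1)
        · change γ * q (.of 2) * γ⁻¹ ∈ _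
          rw [s4]; exact hφm 2
        · change γ * q (.of 3) * γ⁻¹ ∈ _
          rw [s5]; exact hφm 3
        · change γ * q (.of 4) * γ⁻¹ ∈ _
          rw [s6]; exact hφm 4
        · change γ * q (.of 5) * γ⁻¹ ∈ _
          rw [s7]; exact hφm 5
      intro z
      exact this (Subgroup.mem_top z)
    have hγ2 : γ * γ ∈ φ.range := by rw [s8]; exact hφm 5
    let S : Set (FreeGroup (Fin 7) ⧸ N) := {t | (∃ z, t = φ z) ∨ ∃ z, t = φ z * γ}
    have SN : ∀ n ∈ φ.range, ∀ t ∈ S, n * t ∈ S := by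
      rintro _ ⟨n, rfl⟩ t (⟨z, rfl⟩ | ⟨z, rfl⟩)
      · exact Or.inl ⟨n * z, by rw [map_mul]⟩
      · exact Or.inr ⟨n * z, by rw [map_mul, mul_assoc]⟩
    have Sγ : ∀ t ∈ S, γ * t ∈ S := by
      rintro t (⟨z, rfl⟩ | ⟨z, rfl⟩)
      · obtain ⟨z', hz'⟩ := hconj z
        exact Or.inr ⟨z', by rw [hz']; group⟩
      · obtain ⟨z', hz'⟩ := hconj z
        obtain ⟨z'', hz''⟩ := hγ2
        exact Or.inl ⟨z' * z'', by rw [map_mul, hz', hz'']; group⟩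
    have Sγi : ∀ t ∈ S, γ⁻¹ * t ∈ S := by
      intro t ht
      have e : γ⁻¹ * t = (γ * γ)⁻¹ * (γ * t) := by group
      rw [e]
      exact SN _ (Subgroup.inv_mem _ hγ2) _ (Sγ t ht)
    have hall : ∀ z : FreeGroup (Fin 7), q z ∈ S := by
      intro z
      have hz : z ∈ Subgroup.closure (Set.range (FreeGroup.of (α := Fin 7))) := by
        rw [FreeGroup.closure_range_of]; trivial
      induction hz using Subgroup.closure_induction_left with
      | one => exact Or.inl ⟨1, by simp⟩
      | mul_left x hx y hy ih =>
        obtain ⟨i, rfl⟩ := hx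
        rw [map_mul]
        induction i using Fin.lastCases with
        | last => exact Sγ _ ih
        | cast i => exact SN _ (hφm i) _ ih
      | inv_mul_cancel x hx y hy ih =>
        obtain ⟨i, rfl⟩ := hx
        rw [map_mul, map_inv]
        induction i using Fin.lastCases with
        | last => exact Sγi _ ih
        | cast i => exact SN _ (Subgroup.inv_mem _ (hφm i)) _ ih
    have hle : N ≤ (FreeGroup.lift x7).ker := by
      apply Subgroup.normalClosure_le_normal
      intro r hr
      rcases List.mem_append.1 hr with hr | hr
      · exact hR6 r hr
      · exact hR7 r hr
    have hqeq : ∀ z z', q z = q z' → FreeGroup.lift x7 z = FreeGroup.lift x7 z' := by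
      intro z z' h
      have : z * z'⁻¹ ∈ N := by rw [hq, map_mul, map_inv, h, mul_inv_cancel]
      have := hle this
      rw [MonoidHom.mem_ker, map_mul, map_inv, mul_inv_eq_one] at this
      exact this
    rw [hq]
    rcases hall y with ⟨z, hz⟩ | ⟨z, hz⟩
    · have h1 := hqeq y (ι z) hz
      rw [hy, hl, eq_comm, hfk] at h1
      rw [hz]
      rcases h1 with h1 | h1
      · exact hφker z h1
      · have h2 := hφker (z * (.of 1 * .of 1)⁻¹) (by
          rw [map_mul, map_inv, h1]; simp [gens6])
        rw [map_mul, map_inv, mul_inv_eq_one] at h2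
        rw [h2, map_mul, hφi]
        exact s1
    · exfalso
      have h1 := hqeq y (ι z * .of 6) (by rw [hz, map_mul]; rfl)
      rw [hy, map_mul, hl, hx7] at h1
      have h2 : f (FreeGroup.lift (gens6 D) z) * δ = 1 := h1.symm
      apply hδ (FreeGroup.lift (gens6 D) z)⁻¹
      rw [map_inv]
      exact inv_eq_of_mul_eq_one_right h2
  · intro r hr
    rcases List.mem_append.1 hr with hr | hr
    · exact norm_rels D K hK _ _ _ _ _ _ (by simp) (by simp) (by simp) (by simp) (by simp)
        (by simp) r hr
    · exact norm_rels7 D K hK _ _ _ _ _ _ _ (by simp) (by simp) (by simp) (by simp) (by simp)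
        (by simp) (by simp) r hr
  · rw [hlen]

/-! ## Existence of the data -/

/-- Digit lists of the first `k` values of `v`. -/
def mkL (B k : ℕ) (v : ℕ → ℕ) : List (List ℕ) := (List.range k).map fun i => Nat.digits B (v i)

theorem toPoly_mkL (B k : ℕ) (v : ℕ → ℕ) :
    toPoly B (mkL B k v) =
      ∑ i ∈ Finset.range k, Polynomial.C ((v i : ℕ) : ℤ) * Polynomial.X ^ i := by
  induction k generalizing v with
  | zero => simp [mkL, toPoly]
  | succ k ih =>
    have h := ih (fun i => v (i + 1))
    rw [Finset.sum_range_succ']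
    have e : mkL B (k + 1) v = Nat.digits B (v 0) :: mkL B k (fun i => v (i + 1)) := by
      simp [mkL, List.range_succ_eq_map, Function.comp_def]
    rw [e, toPoly, h, Nat.ofDigits_digits, Finset.mul_sum]
    rw [add_comm, pow_zero, mul_one]
    congr 1
    apply Finset.sum_congr rfl
    intro i _
    ring

theorem map_toPoly_mkL (p : ℕ) [Fact p.Prime] (B k : ℕ) (P : Polynomial (ZMod p))
    (hP : P.natDegree < k) :
    (toPoly B (mkL B k fun i => (P.coeff i).val)).map (Int.castRingHom (ZMod p)) = P := by
  rw [toPoly_mkL, Polynomial.map_sum]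
  conv_rhs => rw [P.as_sum_range' k hP]
  apply Finset.sum_congr rfl
  intro i _
  rw [← Polynomial.C_mul_X_pow_eq_monomial, Polynomial.map_mul, Polynomial.map_C,
    Polynomial.map_pow, Polynomial.map_X]
  rw [eq_intCast, Int.cast_natCast, ZMod.natCast_zmod_val]

theorem costN_digits (B : ℕ) (hB : 2 ≤ B) (hB4 : B ≤ 4) (n p : ℕ) (hn : n ≤ p) (hp : 2 ≤ p) :
    costN (Nat.digits B n) ≤ 10 * Nat.log 2 p := by
  have hl : 1 ≤ Nat.log 2 p := Nat.log_pos (by norm_num) hp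
  have h1 : costN (Nat.digits B n) ≤ (Nat.digits B n).length * 5 := by
    rw [costN]
    have := List.sum_le_card_nsmul ((Nat.digits B n).map (· + 2)) 5 (by
      intro x hx
      obtain ⟨d, hd, rfl⟩ := List.mem_map.1 hx
      have := Nat.digits_lt_base (by omega : 1 < B) hd
      omega)
    simpa using this
  have h2 : (Nat.digits B n).length ≤ Nat.log 2 p + 1 := by
    rcases Nat.eq_zero_or_pos n with rfl | hn0
    · simp
    · rw [Nat.length_digits B n (by omega) (by omega)]
      have a1 : Nat.log B n ≤ Nat.log 2 n := Nat.log_anti_left (by norm_num) hB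
      have a2 : Nat.log 2 n ≤ Nat.log 2 p := Nat.log_mono_right hn
      omega
  omega

theorem costP_mkL (B : ℕ) (hB : 2 ≤ B) (hB4 : B ≤ 4) (k p : ℕ) (v : ℕ → ℕ) (hv : ∀ i, v i ≤ p)
    (hp : 2 ≤ p) : costP (mkL B k v) ≤ k * (12 * Nat.log 2 p) := by
  have hl : 1 ≤ Nat.log 2 p := Nat.log_pos (by norm_num) hp
  rw [costP]
  have := List.sum_le_card_nsmul ((mkL B k v).map (costN · + 2)) (12 * Nat.log 2 p) (by
      intro x hx
      obtain ⟨d, hd, rfl⟩ := List.mem_map.1 hx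
      obtain ⟨i, hi, rfl⟩ := List.mem_map.1 hd
      have := costN_digits B hB hB4 (v i) p (hv i) hp
      omega)
  simpa [mkL] using this

theorem exists_PData {F : Type} [Field F] [Finite F] (p : ℕ) [hpp : Fact p.Prime]
    [Algebra (ZMod p) F] (B : ℕ) (hB : 2 ≤ B) (hB4 : B ≤ 4) (s r e z : F)
    (hs : s ≠ 0) (hr : r ≠ 0) (he : e ≠ 0) (hz : z ≠ 0) (heB : e ^ 2 = (B : F))
    (hrs : r ^ 2 = 1 + s ^ 2) (hgen : ∀ x : F, x ≠ 0 → ∃ n : ℕ, z ^ n = x)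
    (hadj : ∀ x : F, ∃ P : Polynomial (ZMod p), Polynomial.aeval (s ^ 2) P = x) :
    ∃ D : PData F, D.z = z ∧ PBound D (24 * Nat.log 2 (Nat.card F)) := by
  have hp2 : 2 ≤ p := hpp.out.two_le
  have : Finite (ZMod p) := inferInstance
  have : Module.Finite (ZMod p) F := Module.Finite.of_finite
  have hint : IsIntegral (ZMod p) (s ^ 2) := Algebra.IsIntegral.isIntegral _
  set f := minpoly (ZMod p) (s ^ 2) with hf
  have hmon : f.Monic := minpoly.monic hint
  set k := f.natDegree with hk
  have hk1 : 1 ≤ k := minpoly.natDegree_pos hint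
  have hkn : k ≤ Module.finrank (ZMod p) F := minpoly.natDegree_le _
  have hq : Nat.card F = p ^ Module.finrank (ZMod p) F := by
    rw [Module.natCard_eq_pow_finrank (K := ZMod p), Nat.card_zmod]
  have hl : 1 ≤ Nat.log 2 p := Nat.log_pos (by norm_num) hp2
  have hlog : Nat.log 2 p * Module.finrank (ZMod p) F ≤ Nat.log 2 (Nat.card F) := by
    apply Nat.le_log_of_pow_le (by norm_num)
    rw [hq, pow_mul]
    exact Nat.pow_le_pow_left (Nat.pow_log_le_self 2 (by omega)) _
  have hlog2 : k * Nat.log 2 p ≤ Nat.log 2 (Nat.card F) :=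
    (Nat.mul_le_mul_right _ hkn).trans ((mul_comm _ _).trans_le hlog)
  have hchoose : ∀ x : F, ∃ P : Polynomial (ZMod p), Polynomial.aeval (s ^ 2) P = x ∧
      P.natDegree < k := by
    intro x
    obtain ⟨P, hP⟩ := hadj x
    refine ⟨P %ₘ f, ?_, ?_⟩
    · rw [← hP]
      exact Polynomial.aeval_modByMonic_eq_self_of_root (minpoly.aeval _ _)
    · exact Polynomial.natDegree_modByMonic_lt _ hmon (by
        intro h; rw [hk, h] at hk1; simp at hk1)
  choose P hP hPd using hchoose
  have hae : ∀ Q : Polynomial ℤ, Polynomial.aeval (s ^ 2) Q =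
      Polynomial.aeval (s ^ 2) (Q.map (Int.castRingHom (ZMod p))) := by
    intro Q
    have := Polynomial.aeval_map_algebraMap (ZMod p) (s ^ 2) Q
    rw [← this]; rfl
  have hval : ∀ x : ZMod p, x.val ≤ p := fun x => (ZMod.val_lt x).le
  have hlfm := map_toPoly_mkL p B (k + 1) f (Nat.lt_succ_self _)
  refine ⟨{ p := p, B := B, lp := Nat.digits B p, lf := mkL B (k + 1) fun i => (f.coeff i).val,
            c := fun x => mkL B k fun i => ((P x).coeff i).val, s := s, r := r, e := e, z := z,
            hp := ?_, hlp := Nat.ofDigits_digits _ _, hs := hs, hr := hr, he := he, hz := hz,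
            heB := heB, hrs := hrs, hgen := hgen, hc := ?_, hlf := ?_, hker := ?_ }, rfl,
            ⟨hB4, ?_, ?_, ?_⟩⟩
  · have : ((p : ZMod p) : ZMod p) = 0 := by simp
    have h := congrArg (algebraMap (ZMod p) F) this
    rw [map_natCast, map_zero] at h
    exact h
  · intro x
    rw [hae, map_toPoly_mkL p B k (P x) (hPd x), hP]
  · rw [hae, hlfm]
    exact minpoly.aeval _ _
  · intro Q hQ
    rw [hae] at hQ
    obtain ⟨Q0, hQ0⟩ := minpoly.dvd _ _ hQ
    obtain ⟨Q1, rfl⟩ := Polynomial.map_surjective (Int.castRingHom (ZMod p))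
      (ZMod.ringHom_surjective _) Q0
    have hz0 : (Q - toPoly B (mkL B (k + 1) fun i => (f.coeff i).val) * Q1).map
        (Int.castRingHom (ZMod p)) = 0 := by
      rw [Polynomial.map_sub, Polynomial.map_mul, hlfm, hQ0, sub_self]
    have hd : Polynomial.C (p : ℤ) ∣
        (Q - toPoly B (mkL B (k + 1) fun i => (f.coeff i).val) * Q1) := by
      rw [Polynomial.C_dvd_iff_dvd_coeff]
      intro i
      have := congrArg (fun g => Polynomial.coeff g i) hz0
      simp only [Polynomial.coeff_map, Polynomial.coeff_zero] at this
      exact (ZMod.intCast_zmod_eq_zero_iff_dvd _ p).1 (by simpa using this)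
    obtain ⟨R, hR⟩ := hd
    exact ⟨Q1, R, by rw [← hR]; ring⟩
  · have := costN_digits B hB hB4 p p le_rfl hp2
    show costN (Nat.digits B p) ≤ _
    nlinarith
  · have := costP_mkL B hB hB4 (k + 1) p (fun i => (f.coeff i).val) (fun i => hval _) hp2
    refine this.trans ?_
    nlinarith
  · intro x
    have := costP_mkL B hB hB4 k p (fun i => ((P x).coeff i).val) (fun i => hval _) hp2
    refine this.trans ?_
    nlinarith

theorem exists_gen_s17 (F : Type) [Field F] [Finite F] : ∃ z : F, z ≠ 0 ∧
    (∀ x : F, x ≠ 0 → ∃ n : ℕ, z ^ n = x) ∧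
    ∀ n : ℕ, 0 < n → z ^ n = 1 → Nat.card F ≤ n + 1 := by
  obtain ⟨g, hg⟩ := IsCyclic.exists_generator (α := Fˣ)
  refine ⟨g, g.ne_zero, ?_, ?_⟩
  · intro x hx
    have h1 := hg (Units.mk0 x hx)
    rw [← mem_powers_iff_mem_zpowers] at h1
    obtain ⟨n, hn⟩ := h1
    refine ⟨n, ?_⟩
    have := congrArg (fun t : Fˣ => (t : F)) hn
    simpa using this
  · intro n hn h
    have h1 : g ^ n = 1 := by ext; simpa using h
    have h2 := orderOf_le_of_pow_eq_one hn h1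
    rw [orderOf_eq_card_of_forall_mem_zpowers hg, Nat.card_units] at h2
    omega

theorem adjoin_odd {F : Type} [Field F] [Finite F] (p : ℕ) [hpp : Fact p.Prime] (hp3 : 3 ≤ p)
    [Algebra (ZMod p) F] (hq : 9 < Nat.card F) (z t : F) (hz0 : z ≠ 0)
    (hord : ∀ n : ℕ, 0 < n → z ^ n = 1 → Nat.card F ≤ n + 1)
    (ht : z ^ 2 + (z ^ 2)⁻¹ = 4 * t + 2) (x : F) :
    ∃ P : Polynomial (ZMod p), Polynomial.aeval t P = x := by
  have : Module.Finite (ZMod p) F := Module.Finite.of_finite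
  have hint : IsIntegral (ZMod p) t := Algebra.IsIntegral.isIntegral _
  let K := IntermediateField.adjoin (ZMod p) {t}
  have htK : t ∈ K := IntermediateField.mem_adjoin_simple_self _ _
  have : Finite K := Subtype.finite
  have hK1 : Nat.card K = p ^ Module.finrank (ZMod p) K := by
    rw [Module.natCard_eq_pow_finrank (K := ZMod p), Nat.card_zmod]
  have hK2 : Nat.card F = Nat.card K ^ Module.finrank K F :=
    Module.natCard_eq_pow_finrank (K := K)
  have : CharP F p := charP_of_injective_algebraMap (algebraMap (ZMod p) F).injective p
  have hpK : p ≤ Nat.card K := by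
    rw [hK1]
    exact Nat.le_self_pow (Module.finrank_pos).ne' p
  set q0 := Nat.card K with hq0
  have hyK : z ^ 2 + (z ^ 2)⁻¹ ∈ K := by
    rw [ht]
    exact K.add_mem (K.mul_mem (ofNat_mem K 4) htK) (ofNat_mem K 2)
  have hy : (z ^ 2 + (z ^ 2)⁻¹) ^ q0 = z ^ 2 + (z ^ 2)⁻¹ := by
    have : Fintype K := Fintype.ofFinite K
    have h1 := FiniteField.pow_card (⟨_, hyK⟩ : K)
    rw [← Nat.card_eq_fintype_card] at h1
    exact congrArg (fun a : K => (a : F)) h1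
  have hx2 : z ^ 2 ≠ 0 := pow_ne_zero _ hz0
  have hle : Nat.card F ≤ 2 * (q0 + 1) + 1 := by
    rw [hK1, add_pow_char_pow, ← hK1, inv_pow] at hy
    set X := (z ^ 2) ^ q0 with hX
    have hX0 : X ≠ 0 := pow_ne_zero _ hx2
    have h2 : (X - z ^ 2) * (X * z ^ 2 - 1) = 0 := by
      field_simp at hy
      linear_combination hy
    rcases mul_eq_zero.1 h2 with h | h
    · have h3 : z ^ (2 * (q0 - 1)) = 1 := by
        have h4 : z ^ 2 * z ^ (2 * (q0 - 1)) = z ^ 2 * 1 := by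
          rw [← pow_add, mul_one]
          rw [hX, ← pow_mul] at h
          rw [← sub_eq_zero.1 h]
          congr 1
          omega
        exact mul_left_cancel₀ hx2 h4
      have := hord _ (by omega) h3
      omega
    · have h3 : z ^ (2 * (q0 + 1)) = 1 := by
        rw [hX, ← pow_mul, ← pow_add] at h
        rw [mul_add, mul_one]
        exact sub_eq_zero.1 h
      exact hord _ (by omega) h3
  have hfr : Module.finrank K F = 1 := by
    have hpos : 0 < Module.finrank K F := Module.finrank_pos
    by_contra hne
    have h2 : 2 ≤ Module.finrank K F := by omega
    have h3 : q0 ^ 2 ≤ Nat.card F := by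
      rw [hK2]; exact Nat.pow_le_pow_right (by omega) h2
    have : q0 ≤ 3 := by nlinarith
    omega
  have htop : K = ⊤ := IntermediateField.finrank_eq_one_iff_eq_top.1 hfr
  have hx : x ∈ K.toSubalgebra := by rw [htop]; trivial
  rw [IntermediateField.adjoin_simple_toSubalgebra_of_isAlgebraic hint.isAlgebraic,
    Algebra.adjoin_singleton_eq_range_aeval] at hx
  exact hx

theorem exists_PData_all (F : Type) [Field F] [Finite F] (hq : 9 < Nat.card F) :
    ∃ D : PData F, PBound D (24 * Nat.log 2 (Nat.card F)) := by
  obtain ⟨z, hz, hgen, hord⟩ := exists_gen_s17 F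
  obtain ⟨p, hchar⟩ := CharP.exists F
  have hp : p.Prime := CharP.char_is_prime F p
  have : Fact p.Prime := ⟨hp⟩
  let _ : Algebra (ZMod p) F := ZMod.algebra F p
  have hz1 : z ≠ 1 := fun h => by
    have := hord 1 (by norm_num) (by simp [h]); omega
  rcases hp.two_le.eq_or_lt with h2 | h3
  · subst h2
    have hch : ringChar F = 2 := ringChar.eq F 2 ▸ rfl
    have h20 : (2 : F) = 0 := by exact_mod_cast CharP.cast_eq_zero F 2
    obtain ⟨D, -, hD⟩ := exists_PData (F := F) 2 3 (by norm_num) (by norm_num) z (1 + z) 1 z hz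
      (fun h => hz1 (by linear_combination h - h20)) one_ne_zero hz
      (by push_cast; linear_combination - h20) (by linear_combination z * h20) hgen
      (by
        intro x
        by_cases hx : x = 0
        · exact ⟨0, by simp [hx]⟩
        · obtain ⟨y, hy⟩ := FiniteField.isSquare_of_char_two hch x
          have hy0 : y ≠ 0 := by rintro rfl; simp at hy; exact hx hy
          obtain ⟨n, hn⟩ := hgen y hy0
          refine ⟨Polynomial.X ^ n, ?_⟩
          rw [map_pow, Polynomial.aeval_X, hy, ← hn]
          ring)
    exact ⟨D, hD⟩
  · have h20 : (2 : F) ≠ 0 := by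
      intro h
      have h' : ((2 : ℕ) : F) = 0 := by exact_mod_cast h
      rw [CharP.cast_eq_zero_iff F p] at h'
      have := Nat.le_of_dvd (by norm_num) h'
      omega
    have h40 : (4 : F) ≠ 0 := by
      intro h; apply h20
      have : (2 : F) * 2 = 0 := by linear_combination h
      simpa using this
    have hz2 : z ^ 2 ≠ 1 := fun h => by
      have := hord 2 (by norm_num) h; omega
    have hz4 : z ^ 4 ≠ 1 := fun h => by
      have := hord 4 (by norm_num) h; omega
    obtain ⟨D, -, hD⟩ := exists_PData (F := F) p 4 (by norm_num) (by norm_num) ((z - z⁻¹) / 2)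
      ((z + z⁻¹) / 2) 2 z
      (by
        intro h; apply hz2
        field_simp at h
        linear_combination h)
      (by
        intro h; apply hz4
        field_simp at h
        linear_combination (z ^ 2 - 1) * h) h20 hz
      (by push_cast; norm_num) (by field_simp; ring) hgen
      (by
        intro x
        apply adjoin_odd p h3 hq z _ hz hord
        field_simp
        ring)
    exact ⟨D, hD⟩

/-! ## Small groups -/

theorem table_hbp (G : Type) [Group G] [Finite G] (N : ℕ) (hN : Nat.card G ≤ N) (C : ℕ)
    (L : ℝ) (hC : N + N * N ≤ C) (hL : ((N + N * N * 3 : ℕ) : ℝ) ≤ L) :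
    HasBoundedPresentation G C C L := by
  classical
  set m := Nat.card G with hm
  let ε : G ≃ Fin m := Finite.equivFin G
  let R : List (FreeGroup (Fin m)) := ((List.finRange m) ×ˢ (List.finRange m)).map fun ij =>
    .of ij.1 * .of ij.2 * (.of (ε (ε.symm ij.1 * ε.symm ij.2)))⁻¹
  have hlen : R.length = m * m := by
    rw [List.length_map]
    exact (List.length_product _ _).trans (by simp)
  have hmm : m * m ≤ N * N := Nat.mul_le_mul hN hN
  have hrel : ∀ r ∈ R, FreeGroup.lift (fun i => ε.symm i) r = 1 := by
    intro r hr
    obtain ⟨ij, -, rfl⟩ := List.mem_map.1 hr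
    simp
  refine hbp_of (fun i => ε.symm i) R ?_ hrel ?_ 3 ?_ C C L (by nlinarith) (by omega) ?_
  · intro g
    exact ⟨.of (ε g), by simp⟩
  · intro y hy
    set S := Subgroup.normalClosure {r | r ∈ R} with hS
    let q := QuotientGroup.mk' S
    have hmul : ∀ g k : G, q (.of (ε g)) * q (.of (ε k)) = q (.of (ε (g * k))) := by
      intro g k
      have h1 : (.of (ε g) * .of (ε k) * (.of (ε (g * k)))⁻¹ : FreeGroup (Fin m)) ∈ S := by
        apply Subgroup.subset_normalClosure
        show _ ∈ R
        refine List.mem_map.2 ⟨(ε g, ε k), ?_, by simp⟩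
        simp
      have h2 : q _ = 1 := (QuotientGroup.eq_one_iff _).2 h1
      rw [map_mul, map_mul, map_inv, mul_inv_eq_one] at h2
      exact h2
    let ψ : G →* FreeGroup (Fin m) ⧸ S := MonoidHom.mk' (fun g => q (.of (ε g)))
      (fun g k => (hmul g k).symm)
    have hψ : ψ.comp (FreeGroup.lift (fun i => ε.symm i)) = q := by
      ext i
      simp [ψ]
    have h3 : q y = 1 := by rw [← hψ, MonoidHom.comp_apply, hy, map_one]
    exact (QuotientGroup.eq_one_iff y).1 h3
  · intro r hr
    obtain ⟨ij, -, rfl⟩ := List.mem_map.1 hr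
    exact norm_mul_le_of (m := 2) (n := 1)
      (norm_mul_le_of (m := 1) (n := 1) (by simp) (by simp)) (norm_inv_le_of (by simp))
  · refine le_trans ?_ hL
    rw [hlen]
    exact_mod_cast (by omega : m + m * m * 3 ≤ N + N * N * 3)

theorem card_mat_le (F : Type) [Field F] [Finite F] (hq : Nat.card F ≤ 9) :
    Nat.card (Matrix (Fin 2) (Fin 2) F) ≤ 6561 := by
  have : Nat.card (Matrix (Fin 2) (Fin 2) F) = Nat.card F ^ 4 := by
    have : Fintype F := Fintype.ofFinite F
    simp [Matrix, Nat.card_eq_fintype_card, ← pow_mul]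
  rw [this]
  calc _ ≤ 9 ^ 4 := Nat.pow_le_pow_left hq 4
    _ = _ := by norm_num

theorem card_SL_le (F : Type) [Field F] [Finite F] (hq : Nat.card F ≤ 9) :
    Nat.card (Matrix.SpecialLinearGroup (Fin 2) F) ≤ 6561 :=
  (Nat.card_le_card_of_injective (fun A : Matrix.SpecialLinearGroup (Fin 2) F =>
    (A : Matrix (Fin 2) (Fin 2) F)) Subtype.coe_injective).trans (card_mat_le F hq)

theorem card_GL_le (F : Type) [Field F] [Finite F] (hq : Nat.card F ≤ 9) :
    Nat.card (Matrix.GeneralLinearGroup (Fin 2) F) ≤ 6561 :=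
  (Nat.card_le_card_of_injective (fun A : Matrix.GeneralLinearGroup (Fin 2) F =>
    (A : Matrix (Fin 2) (Fin 2) F)) Units.val_injective).trans (card_mat_le F hq)

/-! ## The projective groups -/

theorem mW_mW (F : Type) [Field F] :
    ((mW F * mW F : Matrix.SpecialLinearGroup (Fin 2) F) : Matrix (Fin 2) (Fin 2) F) =
      Matrix.scalar (Fin 2) (-1 : F) := by
  ext i j
  fin_cases i <;> fin_cases j <;> simp [mW_coe]

theorem center_SL (F : Type) [Field F] (x : Matrix.SpecialLinearGroup (Fin 2) F) :
    x ∈ Subgroup.center (Matrix.SpecialLinearGroup (Fin 2) F) ↔ (x = 1 ∨ x = mW F * mW F) := by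
  rw [Matrix.SpecialLinearGroup.mem_center_iff]
  constructor
  · rintro ⟨r, hr, hx⟩
    rw [Fintype.card_fin, sq_eq_one_iff] at hr
    rcases hr with rfl | rfl
    · left
      apply Subtype.ext
      rw [← hx]; simp
    · right
      apply Subtype.ext
      rw [← hx]; exact (mW_mW F).symm
  · rintro (rfl | rfl)
    · exact ⟨1, by simp, by simp⟩
    · exact ⟨-1, by simp, (mW_mW F).symm⟩

theorem PSL_hbp {F : Type} [Field F] [Finite F] (D : PData F) (K : ℕ) (hK : PBound D K)
    (C : ℕ) (L : ℝ) (hC : 22 ≤ C) (hL : ((7 + 22 * (3 * K + 10) : ℕ) : ℝ) ≤ L) :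
    HasBoundedPresentation (Matrix.SpecialLinearGroup (Fin 2) F ⧸
          Subgroup.center (Matrix.SpecialLinearGroup (Fin 2) F)) C C L := by
  apply quot_hbp D K hK C L hC hL (QuotientGroup.mk' _) (QuotientGroup.mk'_surjective _)
  intro x
  rw [← center_SL]
  exact QuotientGroup.eq_one_iff x

/-- The map from `SL(2, F)` to `PGL(2, F)`. -/
def toPGL (F : Type) [Field F] : Matrix.SpecialLinearGroup (Fin 2) F →*
    Matrix.GeneralLinearGroup (Fin 2) F ⧸
      Subgroup.center (Matrix.GeneralLinearGroup (Fin 2) F) :=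
  (QuotientGroup.mk' _).comp Matrix.SpecialLinearGroup.toGL

theorem toPGL_ker (F : Type) [Field F] (x : Matrix.SpecialLinearGroup (Fin 2) F) :
    toPGL F x = 1 ↔ (x = 1 ∨ x = mW F * mW F) := by
  rw [← center_SL, ← Matrix.SpecialLinearGroup.toGL_mem_center_iff]
  exact QuotientGroup.eq_one_iff _

theorem mk_eq_iff {F : Type} [Field F] (A B : Matrix.GeneralLinearGroup (Fin 2) F) :
    QuotientGroup.mk' (Subgroup.center (Matrix.GeneralLinearGroup (Fin 2) F)) A =
      QuotientGroup.mk' (Subgroup.center (Matrix.GeneralLinearGroup (Fin 2) F)) B ↔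
      ∃ c : F, (B : Matrix (Fin 2) (Fin 2) F) = (A : Matrix (Fin 2) (Fin 2) F) *
        Matrix.scalar (Fin 2) c := by
  rw [QuotientGroup.mk'_apply, QuotientGroup.mk'_apply, QuotientGroup.eq,
    Matrix.GeneralLinearGroup.mem_center_iff_val_mem_range_scalar]
  constructor
  · rintro ⟨c, hc⟩
    refine ⟨c, ?_⟩
    rw [hc, ← Units.val_mul, mul_inv_cancel_left]
  · rintro ⟨c, hc⟩
    refine ⟨c, ?_⟩
    rw [Units.val_mul, hc, ← mul_assoc, ← Units.val_mul, inv_mul_cancel, Units.val_one, one_mul]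

theorem toPGL_of_det_sq {F : Type} [Field F] (A : Matrix.GeneralLinearGroup (Fin 2) F) (c : F)
    (hc : (A : Matrix (Fin 2) (Fin 2) F).det = c ^ 2) :
    ∃ x, toPGL F x = QuotientGroup.mk' _ A := by
  have hA : (A : Matrix (Fin 2) (Fin 2) F).det ≠ 0 := by
    have := (Matrix.GeneralLinearGroup.det A).ne_zero
    simpa using this
  have hc0 : c ≠ 0 := by rintro rfl; simp at hc; exact hA hc
  refine ⟨⟨(A : Matrix (Fin 2) (Fin 2) F) * Matrix.scalar (Fin 2) c⁻¹, ?_⟩, ?_⟩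
  · rw [Matrix.det_mul, hc]
    simp [hc0]
  · refine (mk_eq_iff _ A).2 ⟨c, ?_⟩
    show _ = (A : Matrix (Fin 2) (Fin 2) F) * Matrix.scalar (Fin 2) c⁻¹ * Matrix.scalar (Fin 2) c
    rw [mul_assoc, ← map_mul, inv_mul_cancel₀ hc0, map_one, mul_one]

/-- The matrix `diag(z, 1)`. -/
def gD {F : Type} [Field F] (z : F) (hz : z ≠ 0) : Matrix.GeneralLinearGroup (Fin 2) F :=
  Matrix.GeneralLinearGroup.mkOfDetNeZero !![z, 0; 0, 1] (by simpa [Matrix.det_fin_two] using hz)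

theorem gD_coe {F : Type} [Field F] (z : F) (hz : z ≠ 0) :
    (gD z hz : Matrix (Fin 2) (Fin 2) F) = !![z, 0; 0, 1] := rfl

theorem PGL_hbp {F : Type} [Field F] [Finite F] (D : PData F) (K : ℕ) (hK : PBound D K)
    (C : ℕ) (L : ℝ) (hC : 22 ≤ C) (hL : ((7 + 22 * (3 * K + 10) : ℕ) : ℝ) ≤ L) :
    HasBoundedPresentation (Matrix.GeneralLinearGroup (Fin 2) F ⧸
          Subgroup.center (Matrix.GeneralLinearGroup (Fin 2) F)) C C L := by
  by_cases h2 : ringChar F = 2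
  · apply quot_hbp D K hK C L hC hL (toPGL F) ?_ (toPGL_ker F)
    intro k
    obtain ⟨A, rfl⟩ := QuotientGroup.mk'_surjective _ k
    obtain ⟨c, hc⟩ := FiniteField.isSquare_of_char_two h2 (A : Matrix (Fin 2) (Fin 2) F).det
    exact toPGL_of_det_sq A c (by rw [hc, sq])
  · have hns : ¬ IsSquare D.z := by
      intro hsq
      obtain ⟨a, ha⟩ := FiniteField.exists_nonsquare h2
      apply ha
      by_cases ha0 : a = 0
      · rw [ha0]; exact ⟨0, by simp⟩
      · obtain ⟨n, hn⟩ := D.hgen a ha0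
        rw [← hn]; exact hsq.pow n
    have hcoe : ∀ x : Matrix.SpecialLinearGroup (Fin 2) F,
      ((Matrix.SpecialLinearGroup.toGL x : Matrix.GeneralLinearGroup (Fin 2) F) :
        Matrix (Fin 2) (Fin 2) F) = x := fun _ => rfl
    refine ext_hbp D K hK C L hC hL (toPGL F) (QuotientGroup.mk' _ (gD D.z D.hz)) (toPGL_ker F)
      ?_ ?_ ?_ ?_ ?_ ?_
    · intro x hx
      obtain ⟨c, hc⟩ := (mk_eq_iff _ _).1 hx
      have h3 := congrArg Matrix.det hc
      rw [Matrix.det_mul, hcoe, x.2, gD_coe] at h3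
      apply hns
      refine ⟨c, ?_⟩
      rw [← sq]
      simpa [Matrix.det_fin_two] using h3
    · intro k
      obtain ⟨A, rfl⟩ := QuotientGroup.mk'_surjective _ k
      have hA : (A : Matrix (Fin 2) (Fin 2) F).det ≠ 0 := by
        have := (Matrix.GeneralLinearGroup.det A).ne_zero
        simpa using this
      obtain ⟨n, hn⟩ := D.hgen _ hA
      rcases Nat.even_or_odd' n with ⟨m, rfl | rfl⟩
      · left
        exact toPGL_of_det_sq A (D.z ^ m) (by rw [← hn, ← pow_mul, mul_comm])
      · right
        have hd : (((A * (gD D.z D.hz)⁻¹ : Matrix.GeneralLinearGroup (Fin 2) F)) :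
            Matrix (Fin 2) (Fin 2) F).det = (D.z ^ m) ^ 2 := by
          have h5 : (((A * (gD D.z D.hz)⁻¹ : Matrix.GeneralLinearGroup (Fin 2) F)) :
            Matrix (Fin 2) (Fin 2) F) * (gD D.z D.hz : Matrix (Fin 2) (Fin 2) F) = A := by
            rw [← Units.val_mul, inv_mul_cancel_right]
          have h6 := congrArg Matrix.det h5
          rw [Matrix.det_mul, ← hn, gD_coe, Matrix.det_fin_two_of] at h6
          apply mul_right_cancel₀ D.hz
          linear_combination h6
        obtain ⟨x, hx⟩ := toPGL_of_det_sq _ _ hd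
        refine ⟨x, ?_⟩
        rw [hx, ← map_mul, inv_mul_cancel_right]
    · show QuotientGroup.mk' _ _ * QuotientGroup.mk' _ _ =
        QuotientGroup.mk' _ _ * QuotientGroup.mk' _ _
      rw [← map_mul, ← map_mul]
      congr 1
      apply Units.ext
      rw [Units.val_mul, Units.val_mul, hcoe, hcoe, gD_coe, mU_coe, mU_coe]
      ext i j
      fin_cases i <;> fin_cases j <;> simp
    · show QuotientGroup.mk' _ _ * QuotientGroup.mk' _ _ =
        QuotientGroup.mk' _ _ * QuotientGroup.mk' _ _
      rw [← map_mul, ← map_mul]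
      congr 1
      apply Units.ext
      rw [Units.val_mul, Units.val_mul, hcoe, hcoe, gD_coe, Matrix.SpecialLinearGroup.coe_mul,
        mW_coe, mH_coe]
      have := D.hz
      ext i j
      fin_cases i <;> fin_cases j <;> simp [this]
    · intro x hx
      show QuotientGroup.mk' _ _ * QuotientGroup.mk' _ _ =
        QuotientGroup.mk' _ _ * QuotientGroup.mk' _ _
      rw [← map_mul, ← map_mul]
      congr 1
      apply Units.ext
      rw [Units.val_mul, Units.val_mul, hcoe, gD_coe, mH_coe]
      ext i j
      fin_cases i <;> fin_cases j <;> simp [mul_comm]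
    · show QuotientGroup.mk' _ _ * QuotientGroup.mk' _ _ = QuotientGroup.mk' _ _
      rw [← map_mul, eq_comm]
      refine (mk_eq_iff _ _).2 ⟨D.z, ?_⟩
      rw [Units.val_mul, hcoe, gD_coe, mH_coe]
      have := D.hz
      ext i j
      fin_cases i <;> fin_cases j <;> simp [this]

/-- There is a constant `C` such that for every finite field `F` of order `q`, each of
`SL(2, F)`, `PSL(2, F)` and `PGL(2, F)` has a presentation with at most `C` generators
and at most `C` relators, of length at most `C·(1 + log₂ q)`. -/
theorem rank_one_short_bounded_presentations :
    ∃ C : ℕ, ∀ (F : Type) [Field F] [Fintype F],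
      HasBoundedPresentation (Matrix.SpecialLinearGroup (Fin 2) F) C C
        (C * (1 + Real.logb 2 (Fintype.card F))) ∧
      HasBoundedPresentation
        (Matrix.SpecialLinearGroup (Fin 2) F ⧸
          Subgroup.center (Matrix.SpecialLinearGroup (Fin 2) F)) C C
        (C * (1 + Real.logb 2 (Fintype.card F))) ∧
      HasBoundedPresentation
        (Matrix.GeneralLinearGroup (Fin 2) F ⧸
          Subgroup.center (Matrix.GeneralLinearGroup (Fin 2) F)) C C
        (C * (1 + Real.logb 2 (Fintype.card F))) := by
  refine ⟨1000000000, ?_⟩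
  intro F _ _
  have hcard : Nat.card F = Fintype.card F := Nat.card_eq_fintype_card
  have hpos : 0 < Fintype.card F := Fintype.card_pos
  have hlog : ((Nat.log 2 (Nat.card F) : ℕ) : ℝ) ≤ Real.logb 2 (Fintype.card F) := by
    rw [Real.le_logb_iff_rpow_le (by norm_num) (by exact_mod_cast hpos), Real.rpow_natCast, hcard]
    exact_mod_cast Nat.pow_log_le_self 2 hpos.ne'
  set ℓ := Real.logb 2 (Fintype.card F) with hℓ
  have h0 : (0 : ℝ) ≤ ((Nat.log 2 (Nat.card F) : ℕ) : ℝ) := Nat.cast_nonneg _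
  by_cases hq : 9 < Nat.card F
  · obtain ⟨D, hD⟩ := exists_PData_all F hq
    have hL : ((7 + 22 * (3 * (24 * Nat.log 2 (Nat.card F)) + 10) : ℕ) : ℝ) ≤
        ((1000000000 : ℕ) : ℝ) * (1 + ℓ) := by
      push_cast
      linarith
    exact ⟨SL_hbp D _ hD _ _ (by norm_num) hL, PSL_hbp D _ hD _ _ (by norm_num) hL,
      PGL_hbp D _ hD _ _ (by norm_num) hL⟩
  · have hq' : Nat.card F ≤ 9 := by omega
    have hL : ((6561 + 6561 * 6561 * 3 : ℕ) : ℝ) ≤ ((1000000000 : ℕ) : ℝ) * (1 + ℓ) := by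
      push_cast
      linarith
    refine ⟨table_hbp _ 6561 (card_SL_le F hq') _ _ (by norm_num) hL,
      table_hbp _ 6561 ?_ _ _ (by norm_num) hL, table_hbp _ 6561 ?_ _ _ (by norm_num) hL⟩
    · exact (Nat.card_le_card_of_surjective _
        (QuotientGroup.mk_surjective (s := Subgroup.center _))).trans (card_SL_le F hq')
    · exact (Nat.card_le_card_of_surjective _
        (QuotientGroup.mk_surjective (s := Subgroup.center _))).trans (card_GL_le F hq')
end
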